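/- Degree-3 modular differential equation for the generator φ_{0,2}: with all heat operators taken with index m = 2, the weak Jacobi form φ_{0,2} = (φ_{0,1}² − E₄·φ_{−2,1}²)/24 satisfies H^{(2)}_{4}(H^{(2)}_{2}(H^{(2)}_{0}(φ_{0,2})))(τ,z) − (47/4)·E₄(τ)·H^{(2)}_{0}(φ_{0,2})(τ,z) + (13/4)·E₆(τ)·φ_{0,2}(τ,z) = 0 for all (τ,z) ∈ ℍ × ℂ. -/

import Mathlib

/-!
Put `∂ = (2πi)⁻¹ d/dz`, `D = (2πi)⁻¹ d/dτ` and `p = -(3/π²)℘`, so that `φ_{0,1} = p φ_{-2,1}`.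
Every heat operator of index `2` maps a form `α φ_{0,1}² + β φ_{0,1} φ_{-2,1} + γ φ_{-2,1}²`, with
`α, β, γ` holomorphic in `τ`, to a form of the same shape (`heatMod_comb`). With Ramanujan's
formulas for `D E₂`, `D E₄`, `D E₆`, three applications to `φ_{0,2}` are explicit (`heat_one`,
`heat_two`, `heat_three`), and the coefficients in the asserted equation cancel.

The facts behind `heatMod_comb` are the heat equation `D ϑ = ∂² ϑ / 2`, the identity
`p = E₂ - 12 ∂² log ϑ`, and the Weierstrass equation `(∂p)² = p³/3 - E₄ p + 2E₆/3`.

* Entire functions that transform like `ϑ(τ,·)²` form a space of dimension at most two, as their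
  Fourier coefficients satisfy a two-step recursion (`IsTheta2.dependent`). Applied to `ϑ²`, `ϑ²℘`
  and `ϑ ∂²ϑ - (∂ϑ)²`, this gives `p = e₂ - 12 ∂² log ϑ` for some `e₂` depending on `τ` alone.
* The Weierstrass equation for `℘` is in Mathlib; its invariants become `E₄` and `E₆` through the
  `q`-expansions of the Eisenstein series (`ode`).
* Differentiating the Weierstrass equation in `τ` by means of the heat equation yields a quadratic
  polynomial in `p` that vanishes for all `z`. As `p` is unbounded, its coefficients vanish, and
  these are Ramanujan's identities with `e₂` in the role of `E₂` (`ramanujan_e2`). They show that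
  `e₂` is the logarithmic derivative of `E₄³ - E₆² = 1728 η²⁴`, hence `e₂ = E₂` (`e2_eq`).
-/

open Complex Real

noncomputable section

/-- The Jacobi theta series `ϑ(τ,z) = q^{1/8} ζ^{1/2} ∑_{n∈ℤ} (−1)^n q^{n(n+1)/2} ζ^n`
with `q = e^{2πiτ}`, `ζ = e^{2πiz}`. -/
def thetaJ (τ z : ℂ) : ℂ :=
  Complex.exp (π * I * τ / 4) * Complex.exp (π * I * z) *
    ∑' n : ℤ, (-1 : ℂ) ^ n * Complex.exp (π * I * τ * n * (n + 1)) *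
      Complex.exp (2 * π * I * z * n)

/-- The Dedekind eta function `η(τ) = q^{1/24} ∏_{n≥1} (1 − q^n)`. -/
def etaD (τ : ℂ) : ℂ :=
  Complex.exp (π * I * τ / 12) * ∏' n : ℕ, (1 - Complex.exp (2 * π * I * τ * (n + 1)))

/-- The divisor power sum `σ_k(n) = ∑_{d ∣ n} d^k`. -/
def sigmaD (k n : ℕ) : ℕ := ∑ d ∈ n.divisors, d ^ k

/-- The quasi-modular Eisenstein series `E₂`. -/
def Eis2 (τ : ℂ) : ℂ :=
  1 - 24 * ∑' n : ℕ, (sigmaD 1 (n + 1) : ℂ) * Complex.exp (2 * π * I * τ * (n + 1))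

/-- The Eisenstein series `E₄`. -/
def Eis4 (τ : ℂ) : ℂ :=
  1 + 240 * ∑' n : ℕ, (sigmaD 3 (n + 1) : ℂ) * Complex.exp (2 * π * I * τ * (n + 1))

/-- The Eisenstein series `E₆`. -/
def Eis6 (τ : ℂ) : ℂ :=
  1 - 504 * ∑' n : ℕ, (sigmaD 5 (n + 1) : ℂ) * Complex.exp (2 * π * I * τ * (n + 1))

/-- The heat operator `H^{(m)}φ = (12/(2πi)) ∂φ/∂τ + (3/(4π²m)) ∂²φ/∂z²` of index `m`. -/
def heatOp (m : ℚ) (φ : ℂ → ℂ → ℂ) (τ z : ℂ) : ℂ :=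
  12 / (2 * π * I) * deriv (fun t => φ t z) τ
    + 3 / (4 * π ^ 2 * (m : ℂ)) * deriv (deriv (φ τ)) z

/-- The modular heat operator `H^{(m)}_k φ = H^{(m)}φ − ((2k−1)/2)·E₂·φ`. -/
def heatMod (m k : ℚ) (φ : ℂ → ℂ → ℂ) (τ z : ℂ) : ℂ :=
  heatOp m φ τ z - (2 * (k : ℂ) - 1) / 2 * Eis2 τ * φ τ z

/-- The weak Jacobi form `φ_{−2,1} = ϑ²/η⁶` of weight −2 and index 1. -/
def phim21 (τ z : ℂ) : ℂ := thetaJ τ z ^ 2 / etaD τ ^ 6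

/-- The weak Jacobi form `φ_{0,1}` of weight 0 and index 1:
`φ_{0,1} = (3/π²)·(ϑ·∂²ϑ/∂z² − (∂ϑ/∂z)²)/η⁶ + E₂·ϑ²/η⁶`. -/
def phi01 (τ z : ℂ) : ℂ :=
  3 / (π : ℂ) ^ 2 *
      (thetaJ τ z * deriv (deriv (thetaJ τ)) z - (deriv (thetaJ τ) z) ^ 2) / etaD τ ^ 6
    + Eis2 τ * thetaJ τ z ^ 2 / etaD τ ^ 6

/-- The weak Jacobi form `φ_{0,2} = (φ_{0,1}² − E₄·φ_{−2,1}²)/24` of weight 0 and index 2. -/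
def phi02 (τ z : ℂ) : ℂ := (phi01 τ z ^ 2 - Eis4 τ * phim21 τ z ^ 2) / 24

/-! ### The theta series and its derivatives -/

/-- The `n`-th summand of `TH k`. -/
def thTerm (k : ℕ) (n : ℤ) (τ z : ℂ) : ℂ :=
  (-1 : ℂ) ^ n * ((n : ℂ) + 1 / 2) ^ k *
    cexp (π * I * τ * ((n : ℂ) + 1 / 2) ^ 2 + 2 * π * I * ((n : ℂ) + 1 / 2) * z)

/-- The theta series with characteristic weighted by `(n + 1/2)^k`; up to powers of `2πi` it is
the `k`-th `z`-derivative of `thetaJ`. -/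
def TH (k : ℕ) (τ z : ℂ) : ℂ := ∑' n : ℤ, thTerm k n τ z

/-- A summable majorant of `thTerm k` on `{T ≤ Im τ, |Im z| ≤ S}`. -/
def thBound (k : ℕ) (S T : ℝ) (n : ℤ) : ℝ :=
  (|(n : ℝ)| + 1) ^ k * rexp (-π * (T * n ^ 2 - 2 * (T / 2 + S) * |(n : ℝ)|)) * rexp (2 * π * S)

lemma summable_thBound (k : ℕ) (S : ℝ) {T : ℝ} (hT : 0 < T) : Summable (thBound k S T) := by
  have h1 := summable_pow_mul_jacobiTheta₂_term_bound (T / 2 + S) hT k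
  have h0 := summable_pow_mul_jacobiTheta₂_term_bound (T / 2 + S) hT 0
  refine Summable.mul_right _ (Summable.of_nonneg_of_le (fun n => by positivity) (fun n => ?_)
    ((h1.add h0).mul_left (2 ^ (k - 1))))
  have := add_pow_le (abs_nonneg (n : ℝ)) zero_le_one k
  rw [one_pow] at this
  push_cast
  rw [pow_zero, ← add_mul, ← mul_assoc]
  gcongr

lemma norm_thTerm_le (k : ℕ) (n : ℤ) {τ z : ℂ} {S T : ℝ} (hT : 0 < T) (hτ : T ≤ τ.im)
    (hz : |z.im| ≤ S) : ‖thTerm k n τ z‖ ≤ thBound k S T n := by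
  have hS : 0 ≤ S := (abs_nonneg _).trans hz
  have hn : ((n : ℂ) + 1 / 2) = (((n : ℝ) + 1 / 2 : ℝ) : ℂ) := by push_cast; rfl
  have hre : (π * I * τ * ((n : ℂ) + 1 / 2) ^ 2 + 2 * π * I * ((n : ℂ) + 1 / 2) * z).re
      = -π * (τ.im * (n + 1 / 2 : ℝ) ^ 2 + 2 * ((n + 1 / 2 : ℝ) * z.im)) := by
    rw [hn, ← ofReal_pow]
    have h2 : (2 : ℂ) = ((2 : ℝ) : ℂ) := by norm_num
    rw [h2]
    simp only [add_re, mul_re, mul_im, ofReal_re, ofReal_im, I_re, I_im]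
    ring
  have habs : |(n + 1 / 2 : ℝ)| ≤ |(n : ℝ)| + 1 := by
    refine (abs_add_le _ _).trans ?_
    norm_num [abs_of_pos]
  rw [thTerm, norm_mul, norm_mul, norm_pow, Complex.norm_exp, hre, norm_zpow, norm_neg, norm_one,
    one_zpow, one_mul, hn, norm_real, Real.norm_eq_abs, thBound, mul_assoc, ← Real.exp_add]
  refine mul_le_mul (by gcongr) (Real.exp_le_exp.mpr ?_) (Real.exp_pos _).le (by positivity)
  have h1 : T * (n + 1 / 2 : ℝ) ^ 2 ≤ τ.im * (n + 1 / 2 : ℝ) ^ 2 := by gcongr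
  have h2 : -((n + 1 / 2 : ℝ) * z.im) ≤ (|(n : ℝ)| + 1) * S := by
    refine (neg_le_abs _).trans ?_
    rw [abs_mul]
    gcongr
  have h3 : T * ((n : ℝ) ^ 2 - |(n : ℝ)|) ≤ T * (n + 1 / 2 : ℝ) ^ 2 := by
    gcongr
    have := neg_abs_le (n : ℝ)
    nlinarith
  have h4 : 0 ≤ (τ.im * (n + 1 / 2 : ℝ) ^ 2 + 2 * ((n + 1 / 2 : ℝ) * z.im)) -
    (T * ((n : ℝ) ^ 2 - |(n : ℝ)|) - 2 * ((|(n : ℝ)| + 1) * S)) := by linarith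
  nlinarith [mul_nonneg Real.pi_pos.le h4]

lemma summable_thTerm (k : ℕ) {τ : ℂ} (hτ : 0 < τ.im) (z : ℂ) :
    Summable fun n : ℤ => thTerm k n τ z :=
  Summable.of_norm_bounded (summable_thBound k |z.im| hτ)
    fun n => norm_thTerm_le k n hτ le_rfl le_rfl

lemma hasDerivAt_TH_z (k : ℕ) {τ : ℂ} (hτ : 0 < τ.im) (z : ℂ) :
    HasDerivAt (TH k τ) (2 * π * I * TH (k + 1) τ z) z := by
  set S := |z.im| + 1
  have hopen : IsOpen {w : ℂ | |w.im| < S} :=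
    isOpen_lt (by fun_prop) continuous_const
  have hconv : Convex ℝ {w : ℂ | |w.im| < S} := by
    have : {w : ℂ | |w.im| < S} = Complex.imLm ⁻¹' (Set.Ioo (-S) S) := by
      ext w; simp [abs_lt]
    rw [this]
    exact (convex_Ioo _ _).linear_preimage _
  have hmem : z ∈ {w : ℂ | |w.im| < S} := by simp [S]
  have key := hasDerivAt_tsum_of_isPreconnected
    (g := fun (n : ℤ) w => thTerm k n τ w) (g' := fun (n : ℤ) w => 2 * π * I * thTerm (k + 1) n τ w)
    ((summable_thBound (k + 1) S hτ).mul_left ‖(2 * π * I : ℂ)‖) hopen hconv.isPreconnected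
    (fun n w _ => by
      have : HasDerivAt (fun w => π * I * τ * ((n : ℂ) + 1 / 2) ^ 2
          + 2 * π * I * ((n : ℂ) + 1 / 2) * w) (2 * π * I * ((n : ℂ) + 1 / 2)) w := by
        simpa using ((hasDerivAt_id w).const_mul (2 * π * I * ((n : ℂ) + 1 / 2))).const_add
          (π * I * τ * ((n : ℂ) + 1 / 2) ^ 2)
      have h2 := this.cexp.const_mul ((-1 : ℂ) ^ n * ((n : ℂ) + 1 / 2) ^ k)
      refine h2.congr_deriv ?_
      rw [thTerm]; ring)
    (fun n w hw => by
      rw [norm_mul]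
      gcongr
      exact norm_thTerm_le _ n hτ le_rfl (le_of_lt hw)) hmem (summable_thTerm k hτ z) hmem
  rw [tsum_mul_left] at key
  exact key

lemma hasDerivAt_TH_tau (k : ℕ) {τ : ℂ} (hτ : 0 < τ.im) (z : ℂ) :
    HasDerivAt (fun t => TH k t z) (π * I * TH (k + 2) τ z) τ := by
  set T := τ.im / 2
  have hT : 0 < T := by positivity
  have hopen : IsOpen {w : ℂ | T < w.im} := isOpen_lt continuous_const (by fun_prop)
  have hconv : Convex ℝ {w : ℂ | T < w.im} := convex_halfSpace_im_gt T
  have hmem : τ ∈ {w : ℂ | T < w.im} := by simp [T]; linarith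
  have key := hasDerivAt_tsum_of_isPreconnected
    (g := fun (n : ℤ) t => thTerm k n t z) (g' := fun (n : ℤ) t => π * I * thTerm (k + 2) n t z)
    ((summable_thBound (k + 2) |z.im| hT).mul_left ‖(π * I : ℂ)‖) hopen hconv.isPreconnected
    (fun n w _ => by
      have : HasDerivAt (fun w => π * I * w * ((n : ℂ) + 1 / 2) ^ 2
          + 2 * π * I * ((n : ℂ) + 1 / 2) * z) (π * I * ((n : ℂ) + 1 / 2) ^ 2) w := by
        simpa using (((hasDerivAt_id w).const_mul (π * I : ℂ)).mul_const
          (((n : ℂ) + 1 / 2) ^ 2)).add_const (2 * π * I * ((n : ℂ) + 1 / 2) * z)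
      have h2 := this.cexp.const_mul ((-1 : ℂ) ^ n * ((n : ℂ) + 1 / 2) ^ k)
      refine h2.congr_deriv ?_
      rw [thTerm]; ring)
    (fun n w hw => by
      rw [norm_mul]
      gcongr
      exact norm_thTerm_le _ n hT (le_of_lt hw) le_rfl) hmem (summable_thTerm k hτ z) hmem
  rw [tsum_mul_left] at key
  exact key

lemma thetaJ_eq (τ z : ℂ) : thetaJ τ z = TH 0 τ z := by
  rw [thetaJ, TH, ← tsum_mul_left]
  congr 1
  ext n
  rw [thTerm, pow_zero, mul_one, mul_left_comm (_ * _), mul_assoc, mul_assoc, ← mul_assoc (cexp _)]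
  simp only [mul_assoc, ← Complex.exp_add]
  ring_nf

lemma TH_add_one (k : ℕ) (τ z : ℂ) : TH k τ (z + 1) = - TH k τ z := by
  rw [TH, TH, ← tsum_neg]
  congr 1
  ext n
  have : cexp (π * I * τ * ((n : ℂ) + 1 / 2) ^ 2 + 2 * π * I * ((n : ℂ) + 1 / 2) * (z + 1)) =
      - cexp (π * I * τ * ((n : ℂ) + 1 / 2) ^ 2 + 2 * π * I * ((n : ℂ) + 1 / 2) * z) := by
    rw [show π * I * τ * ((n : ℂ) + 1 / 2) ^ 2 + 2 * π * I * ((n : ℂ) + 1 / 2) * (z + 1) =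
      (π * I * τ * ((n : ℂ) + 1 / 2) ^ 2 + 2 * π * I * ((n : ℂ) + 1 / 2) * z) +
        (n * (2 * π * I) + π * I) by ring, Complex.exp_add,
      Complex.exp_add (n * (2 * π * I)), Complex.exp_int_mul_two_pi_mul_I, Complex.exp_pi_mul_I]
    ring
  rw [thTerm, thTerm, this]; ring

lemma TH_neg (k : ℕ) (τ z : ℂ) : TH k τ (-z) = (-1) ^ (k + 1) * TH k τ z := by
  rw [TH, TH, ← tsum_mul_left, ← (Equiv.subLeft (-1 : ℤ)).tsum_eq]
  congr 1
  ext n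
  have h1 : ((-1 : ℂ)) ^ (-1 - n) = - (-1) ^ n := by
    rw [zpow_sub₀ (by norm_num)]
    rcases Int.even_or_odd n with h | h
    · simp [h.neg_one_zpow]
    · simp [h.neg_one_zpow]
  simp only [thTerm, Equiv.subLeft_apply, h1]
  rw [show (((-1 - n : ℤ) : ℂ) + 1 / 2) = -((n : ℂ) + 1 / 2) by push_cast; ring, neg_pow _ k,
    neg_sq, pow_succ]
  rw [show 2 * π * I * -((n : ℂ) + 1 / 2) * -z = 2 * π * I * ((n : ℂ) + 1 / 2) * z by ring]
  ring

/-- The automorphy factor of `thetaJ` under `z ↦ z + τ`. -/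
def thFac (τ z : ℂ) : ℂ := -cexp (-(π * I * τ) - 2 * π * I * z)

lemma TH_zero_add_tau (τ z : ℂ) : TH 0 τ (z + τ) = thFac τ z * TH 0 τ z := by
  rw [TH, TH, ← tsum_mul_left, ← (Equiv.addRight (1 : ℤ)).tsum_eq (fun n => _ * _)]
  congr 1
  ext n
  simp only [thTerm, thFac, Equiv.coe_addRight, pow_zero, mul_one]
  rw [zpow_add₀ (by norm_num), zpow_one]
  have : ∀ a b c : ℂ, -cexp a * (b * -1 * cexp c) = b * cexp (a + c) := by
    intro a b c; rw [Complex.exp_add]; ring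
  rw [this]
  congr 2
  push_cast
  ring

/-! ### The space of theta functions of index one -/

/-- Entire functions with the transformation behaviour of `ϑ(τ,·)²`. -/
structure IsTheta2 (τ : ℂ) (f : ℂ → ℂ) : Prop where
  diff : Differentiable ℂ f
  add_one : ∀ z, f (z + 1) = f z
  add_tau : ∀ z, f (z + τ) = thFac τ z ^ 2 * f z

/-- Cauchy's theorem: the mean of an entire `1`-periodic function over a horizontal period does
not depend on the base point. -/
lemma integral_periodic_shift {h : ℂ → ℂ} (hd : Differentiable ℂ h) (hp : ∀ z, h (z + 1) = h z)
    (w : ℂ) : ∫ x in (0 : ℝ)..1, h (x + w) = ∫ x in (0 : ℝ)..1, h x := by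
  have h1 := integral_boundary_rect_eq_zero_of_differentiableOn h 0 (1 + w.im * I)
    hd.differentiableOn
  simp only [zero_re, zero_im, add_re, one_re, mul_re, ofReal_re, I_re, mul_zero, ofReal_im, I_im,
    mul_one, sub_self, add_zero, add_im, one_im, mul_im, zero_add, ofReal_zero, zero_mul,
    ofReal_one] at h1
  have h2 : ∀ y : ℝ, h (1 + y * I) = h (y * I) := fun y => by rw [add_comm, hp]
  simp only [h2] at h1
  have h3 : Function.Periodic (fun x : ℝ => h (x + w.im * I)) 1 := fun x => by
    simp only; rw [← hp (x + w.im * I)]; congr 1; push_cast; ring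
  have h4 := h3.intervalIntegral_add_eq w.re 0
  have h5 : ∫ x in (0 : ℝ)..1, h (x + w) = ∫ x in (0 : ℝ)..1,
      (fun x : ℝ => h (x + w.im * I)) (x + w.re) := by
    congr 1; ext x
    simp only
    congr 1
    conv_lhs => rw [← re_add_im w]
    push_cast; ring
  rw [h5, intervalIntegral.integral_comp_add_right (fun x : ℝ => h (x + w.im * I)),
    zero_add, add_comm 1 w.re, h4, zero_add]
  linear_combination -h1

/-- The `n`-th Fourier coefficient of a function along the real axis. -/
def fco (f : ℂ → ℂ) (n : ℤ) : ℂ := ∫ x in (0 : ℝ)..1, f x * cexp (-(2 * π * I * n * x))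

lemma fco_shift {f : ℂ → ℂ} (hd : Differentiable ℂ f) (hp : ∀ z, f (z + 1) = f z) (n : ℤ) (w : ℂ) :
    ∫ x in (0 : ℝ)..1, f (x + w) * cexp (-(2 * π * I * n * (x + w))) = fco f n := by
  refine integral_periodic_shift (h := fun z => f z * cexp (-(2 * π * I * n * z)))
    (hd.mul (by fun_prop)) (fun z => ?_) w
  rw [hp, show -(2 * π * I * n * (z + 1)) = -(2 * π * I * n * z) + (-n : ℤ) * (2 * π * I) by
    push_cast; ring, Complex.exp_add, exp_int_mul_two_pi_mul_I, mul_one]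

/-- The transformation under `z ↦ z + τ` links the Fourier coefficients of `n` and `n + 2`, so that
those of `0` and `1` determine the function. -/
lemma fco_rec {τ : ℂ} {f : ℂ → ℂ} (hf : IsTheta2 τ f) (n : ℤ) :
    fco f n = cexp (-(2 * π * I * (n + 1) * τ)) * fco f (n + 2) := by
  rw [← fco_shift hf.diff hf.add_one n τ]
  simp only [fco]
  rw [← intervalIntegral.integral_const_mul]
  congr 1; ext x
  rw [hf.add_tau, thFac, neg_sq, sq, ← Complex.exp_add, mul_right_comm, ← Complex.exp_add, mul_comm,
    mul_left_comm, ← Complex.exp_add, mul_comm]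
  push_cast
  rw [mul_comm]
  congr 2
  ring

lemma eq_zero_of_fco {f : ℂ → ℂ} (hd : Differentiable ℂ f) (hp : ∀ z, f (z + 1) = f z)
    (h0 : ∀ n, fco f n = 0) (w : ℂ) : f w = 0 := by
  have : Fact ((0 : ℝ) < 1) := ⟨one_pos⟩
  have hper : Function.Periodic (fun x : ℝ => f (x + w)) 1 := fun x => by
    simp only; rw [← hp (x + w)]; congr 1; push_cast; ring
  let g : C(AddCircle (1 : ℝ), ℂ) := ⟨hper.lift, by
    have := hd.continuous
    exact continuous_coinduced_dom.mpr (by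
      change Continuous fun x : ℝ => f (x + w)
      fun_prop)⟩
  have hg : fourierCoeff g = 0 := by
    ext n
    rw [fourierCoeff_eq_intervalIntegral _ n 0]
    have h1 := fco_shift hd hp n w
    rw [h0 n] at h1
    have h2 : ∫ x in (0 : ℝ)..0 + 1, (fourier (-n) (x : AddCircle (1 : ℝ)) : ℂ) • g x =
        cexp (2 * π * I * n * w) *
          ∫ x in (0 : ℝ)..1, f (x + w) * cexp (-(2 * π * I * n * (x + w))) := by
      rw [← intervalIntegral.integral_const_mul, zero_add]
      congr 1; ext x
      have : g x = f (x + w) := rfl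
      rw [this, fourier_coe_apply, smul_eq_mul, mul_left_comm, ← Complex.exp_add, mul_comm]
      congr 2
      push_cast; ring
    rw [h2, h1]; simp
  have hs := has_pointwise_sum_fourier_series_of_summable (f := g) (by rw [hg]; exact summable_zero)
    (0 : ℝ)
  rw [hg] at hs
  simp only [Pi.zero_apply, zero_smul] at hs
  have : g (0 : ℝ) = f w := by
    change f ((0 : ℝ) + w) = f w
    simp
  rw [← this]
  exact hs.unique hasSum_zero

lemma IsTheta2.eq_zero {τ : ℂ} {f : ℂ → ℂ} (hf : IsTheta2 τ f) (h0 : fco f 0 = 0)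
    (h1 : fco f 1 = 0) (w : ℂ) : f w = 0 := by
  refine eq_zero_of_fco hf.diff hf.add_one (fun n => ?_) w
  have key : ∀ n, fco f n = 0 ↔ fco f (n + 2) = 0 := fun n => by
    rw [fco_rec hf n]; simp [Complex.exp_ne_zero]
  have : ∀ n, fco f n = 0 ∧ fco f (n + 1) = 0 := fun n => by
    induction n using Int.induction_on with
    | zero => exact ⟨h0, h1⟩
    | succ k ih => exact ⟨ih.2, by rw [add_assoc]; exact (key _).1 ih.1⟩
    | pred k ih =>
      refine ⟨?_, by simpa using ih.1⟩
      rw [key]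
      convert ih.2 using 2
      ring
  exact (this n).1

lemma fco_comb {f g h : ℂ → ℂ} (hf : Continuous f) (hg : Continuous g) (hh : Continuous h)
    (α β γ : ℂ) (n : ℤ) : fco (fun z => α * f z + β * g z + γ * h z) n =
      α * fco f n + β * fco g n + γ * fco h n := by
  simp only [fco]
  rw [← intervalIntegral.integral_const_mul, ← intervalIntegral.integral_const_mul,
    ← intervalIntegral.integral_const_mul, ← intervalIntegral.integral_add,
    ← intervalIntegral.integral_add]
  · congr 1; ext x; ring
  all_goals exact Continuous.intervalIntegrable (by fun_prop) _ _

lemma IsTheta2.comb {τ : ℂ} {f g h : ℂ → ℂ} (hf : IsTheta2 τ f) (hg : IsTheta2 τ g)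
    (hh : IsTheta2 τ h) (α β γ : ℂ) : IsTheta2 τ (fun z => α * f z + β * g z + γ * h z) where
  diff := ((hf.diff.const_mul α).add (hg.diff.const_mul β)).add (hh.diff.const_mul γ)
  add_one z := by simp only [hf.add_one, hg.add_one, hh.add_one]
  add_tau z := by simp only [hf.add_tau, hg.add_tau, hh.add_tau]; ring

/-- The space is at most two-dimensional: any three of its elements are linearly dependent. -/
lemma IsTheta2.dependent {τ : ℂ} {f g h : ℂ → ℂ} (hf : IsTheta2 τ f) (hg : IsTheta2 τ g)
    (hh : IsTheta2 τ h) : ∃ α β γ : ℂ, (α ≠ 0 ∨ β ≠ 0 ∨ γ ≠ 0) ∧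
      ∀ z, α * f z + β * g z + γ * h z = 0 := by
  let A : (Fin 3 → ℂ) →ₗ[ℂ] (Fin 2 → ℂ) := Matrix.mulVecLin
    !![fco f 0, fco g 0, fco h 0; fco f 1, fco g 1, fco h 1]
  obtain ⟨v, hv, hne⟩ : ∃ v ∈ LinearMap.ker A, v ≠ 0 := by
    apply Submodule.exists_mem_ne_zero_of_ne_bot
    apply LinearMap.ker_ne_bot_of_finrank_lt
    simp
  rw [LinearMap.mem_ker] at hv
  have e0 := congrFun hv 0
  have e1 := congrFun hv 1
  simp [A, Matrix.mulVec, dotProduct, Fin.sum_univ_three] at e0 e1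
  refine ⟨v 0, v 1, v 2, ?_, (hf.comb hg hh _ _ _).eq_zero ?_ ?_⟩
  · by_contra! hc
    apply hne
    ext i; fin_cases i <;> simp [hc]
  all_goals
    rw [fco_comb hf.diff.continuous hg.diff.continuous hh.diff.continuous]
  · linear_combination e0
  · linear_combination e1

/-! ### Non-vanishing of the theta function and elements of the space `IsTheta2` -/

lemma differentiable_TH (k : ℕ) {τ : ℂ} (hτ : 0 < τ.im) : Differentiable ℂ (TH k τ) :=
  fun z => (hasDerivAt_TH_z k hτ z).differentiableAt

/-- The integral of `ϑ(τ,x) e^{-πix}` over a period is `q^{1/8} ≠ 0`. -/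
lemma exists_TH_ne_zero {τ : ℂ} (hτ : 0 < τ.im) : ∃ w, TH 0 τ w ≠ 0 := by
  by_contra! hc
  set F : ℤ → ℝ → ℂ := fun n x => thTerm 0 n τ x * cexp (-(π * I * x)) with hF
  have hFn : ∀ n (x : ℝ), F n x = thTerm 0 n τ 0 * cexp ((2 * π * I * n) * x) := fun n x => by
    simp only [hF, thTerm]
    rw [mul_assoc ((-1 : ℂ) ^ n * _), mul_assoc ((-1 : ℂ) ^ n * _), ← Complex.exp_add,
      ← Complex.exp_add]
    congr 2
    ring
  have hnorm : ∀ n (x : ℝ), ‖F n x‖ ≤ ‖thTerm 0 n τ 0‖ := fun n x => by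
    rw [hFn, norm_mul, show (2 * π * I * n) * (x : ℂ) = ((2 * π * n * x : ℝ) : ℂ) * I by
      push_cast; ring, norm_exp_ofReal_mul_I, mul_one]
  have hcont : ∀ n, Continuous (F n) := fun n => by
    have : F n = fun x : ℝ => thTerm 0 n τ 0 * cexp ((2 * π * I * n) * x) := funext (hFn n)
    rw [this]; fun_prop
  have h := intervalIntegral.hasSum_integral_of_dominated_convergence (a := 0) (b := 1)
    (μ := MeasureTheory.volume) (F := F) (f := fun _ => (0 : ℂ)) (fun n _ => ‖thTerm 0 n τ 0‖)
    (fun n => (hcont n).aestronglyMeasurable)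
    (fun n => Filter.Eventually.of_forall fun x _ => hnorm n x)
    (Filter.Eventually.of_forall fun x _ => (summable_thTerm 0 hτ 0).norm)
    (by simp)
    (Filter.Eventually.of_forall fun x _ => by
      have := ((summable_thTerm 0 hτ (x : ℂ)).hasSum).mul_right (cexp (-(π * I * x)))
      have h0 := hc x
      rw [TH] at h0
      rwa [h0, zero_mul] at this)
  rw [intervalIntegral.integral_zero] at h
  have hv : ∀ n, n ≠ 0 → ∫ x in (0 : ℝ)..1, F n x = 0 := fun n hn => by
    simp only [hFn]
    rw [intervalIntegral.integral_const_mul, integral_exp_mul_complex]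
    · rw [show 2 * π * I * n * ((1 : ℝ) : ℂ) = n * (2 * π * I) by push_cast; ring,
        exp_int_mul_two_pi_mul_I]
      simp
    · simp [hn, Real.pi_ne_zero]
  have h0 : ∫ x in (0 : ℝ)..1, F 0 x = thTerm 0 0 τ 0 := by
    simp [hFn]
  have := h.unique (hasSum_single 0 hv)
  rw [h0] at this
  exact (by simp [thTerm, Complex.exp_ne_zero] : thTerm 0 0 τ 0 ≠ 0) this.symm

lemma TH_zero_zero (τ : ℂ) : TH 0 τ 0 = 0 := by
  have := TH_neg 0 τ 0
  simp only [neg_zero, zero_add, pow_one] at this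
  linear_combination this / 2

lemma thFac_ne_zero (τ z : ℂ) : thFac τ z ≠ 0 := by simp [thFac, Complex.exp_ne_zero]

lemma hasDerivAt_thFac (τ z : ℂ) : HasDerivAt (thFac τ) (-(2 * π * I) * thFac τ z) z := by
  have : HasDerivAt (fun z => -(π * I * τ) - 2 * π * I * z) (-(2 * π * I)) z := by
    simpa using ((hasDerivAt_id z).const_mul (2 * π * I)).const_sub (-(π * I * τ))
  refine this.cexp.neg.congr_deriv ?_
  rw [thFac]; ring

lemma TH_one_add_tau {τ : ℂ} (hτ : 0 < τ.im) (z : ℂ) :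
    TH 1 τ (z + τ) = thFac τ z * (TH 1 τ z - TH 0 τ z) := by
  have h1 : HasDerivAt (fun z => TH 0 τ (z + τ)) (2 * π * I * TH 1 τ (z + τ)) z :=
    (hasDerivAt_TH_z 0 hτ (z + τ)).comp_add_const z τ
  have h2 := (hasDerivAt_thFac τ z).mul (hasDerivAt_TH_z 0 hτ z)
  have h3 : (fun z => TH 0 τ (z + τ)) = thFac τ * TH 0 τ := funext fun z => TH_zero_add_tau τ z
  rw [h3] at h1
  have := h1.unique h2
  apply mul_left_cancel₀ two_pi_I_ne_zero
  linear_combination this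

lemma TH_two_add_tau {τ : ℂ} (hτ : 0 < τ.im) (z : ℂ) :
    TH 2 τ (z + τ) = thFac τ z * (TH 2 τ z - 2 * TH 1 τ z + TH 0 τ z) := by
  have h1 : HasDerivAt (fun z => TH 1 τ (z + τ)) (2 * π * I * TH 2 τ (z + τ)) z :=
    (hasDerivAt_TH_z 1 hτ (z + τ)).comp_add_const z τ
  have h2 := (hasDerivAt_thFac τ z).mul ((hasDerivAt_TH_z 1 hτ z).sub (hasDerivAt_TH_z 0 hτ z))
  have h3 : (fun z => TH 1 τ (z + τ)) = thFac τ * (TH 1 τ - TH 0 τ) :=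
    funext fun z => TH_one_add_tau hτ z
  rw [h3] at h1
  have := h1.unique h2
  apply mul_left_cancel₀ two_pi_I_ne_zero
  simp only [Pi.sub_apply] at this
  linear_combination this

lemma isTheta2_sq {τ : ℂ} (hτ : 0 < τ.im) : IsTheta2 τ (fun z => TH 0 τ z ^ 2) where
  diff := (differentiable_TH 0 hτ).pow 2
  add_one z := by rw [TH_add_one]; ring
  add_tau z := by rw [TH_zero_add_tau]; ring

lemma isTheta2_wronskian {τ : ℂ} (hτ : 0 < τ.im) :
    IsTheta2 τ (fun z => TH 0 τ z * TH 2 τ z - TH 1 τ z ^ 2) where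
  diff := ((differentiable_TH 0 hτ).mul (differentiable_TH 2 hτ)).sub
    ((differentiable_TH 1 hτ).pow 2)
  add_one z := by simp only [TH_add_one]; ring
  add_tau z := by simp only [TH_zero_add_tau, TH_one_add_tau hτ, TH_two_add_tau hτ]; ring

lemma isTheta2_translate {τ : ℂ} (hτ : 0 < τ.im) (w : ℂ) :
    IsTheta2 τ (fun z => TH 0 τ (z + w) * TH 0 τ (z - w)) where
  diff := by
    have := differentiable_TH 0 hτ
    fun_prop
  add_one z := by rw [add_right_comm, add_sub_right_comm, TH_add_one, TH_add_one]; ring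
  add_tau z := by
    rw [add_right_comm, add_sub_right_comm, TH_zero_add_tau, TH_zero_add_tau]
    have : thFac τ (z + w) * thFac τ (z - w) = thFac τ z ^ 2 := by
      simp only [thFac, sq, neg_mul_neg, ← Complex.exp_add]
      congr 1; ring
    rw [← this]; ring

/-! ### Weierstrass `℘` in terms of theta functions -/

/-- The period pair `(1, τ)`. -/
def perPair {τ : ℂ} (hτ : 0 < τ.im) : PeriodPair where
  ω₁ := 1
  ω₂ := τ
  indep := by
    rw [LinearIndependent.pair_iff]
    intro s t h
    have him := congrArg Complex.im h
    simp at him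
    have ht : t = 0 := him.resolve_right hτ.ne'
    have hre := congrArg Complex.re h
    simp [ht] at hre
    exact ⟨hre, ht⟩

lemma TH_zero_of_mem_lattice {τ : ℂ} (hτ : 0 < τ.im) {z : ℂ} (hz : z ∈ (perPair hτ).lattice) :
    TH 0 τ z = 0 := by
  rw [PeriodPair.mem_lattice] at hz
  obtain ⟨m, n, rfl⟩ := hz
  change TH 0 τ (m * 1 + n * τ) = 0
  have h1 : ∀ z, TH 0 τ (z + 1) = 0 ↔ TH 0 τ z = 0 := fun z => by rw [TH_add_one]; simp
  have h2 : ∀ z, TH 0 τ (z + τ) = 0 ↔ TH 0 τ z = 0 := fun z => by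
    rw [TH_zero_add_tau]; simp [thFac_ne_zero]
  have h3 : ∀ n : ℤ, TH 0 τ (n * τ) = 0 := fun n => by
    induction n using Int.induction_on with
    | zero => simpa using TH_zero_zero τ
    | succ k ih => push_cast at ih ⊢; rw [add_mul, one_mul, h2, ih]
    | pred k ih => rw [← h2]; push_cast at ih ⊢; rw [← ih]; congr 1; ring
  induction m using Int.induction_on with
  | zero => simpa using h3 n
  | succ k ih => rw [← (h1 _).2 ih]; congr 1; push_cast; ring
  | pred k ih => rw [← h1, ← ih]; congr 1; push_cast; ring

open Classical in
/-- The entire function `ϑ²℘`, with its values at the lattice points filled in. -/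
def thetaSqP {τ : ℂ} (hτ : 0 < τ.im) (z : ℂ) : ℂ :=
  if z ∈ (perPair hτ).lattice then (2 * π * I * TH 1 τ z) ^ 2
  else TH 0 τ z ^ 2 * (perPair hτ).weierstrassP z

lemma thetaSqP_of_notMem {τ : ℂ} (hτ : 0 < τ.im) {z : ℂ} (hz : z ∉ (perPair hτ).lattice) :
    thetaSqP hτ z = TH 0 τ z ^ 2 * (perPair hτ).weierstrassP z := if_neg hz

lemma isTheta2_thetaSqP {τ : ℂ} (hτ : 0 < τ.im) : IsTheta2 τ (thetaSqP hτ) := by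
  set L := perPair hτ with hL
  have m1 : ∀ z, z + 1 ∈ L.lattice ↔ z ∈ L.lattice := fun z =>
    (Submodule.add_mem_iff_left _ L.ω₁_mem_lattice)
  have m2 : ∀ z, z + τ ∈ L.lattice ↔ z ∈ L.lattice := fun z =>
    (Submodule.add_mem_iff_left _ L.ω₂_mem_lattice)
  refine ⟨fun z => ?_, fun z => ?_, fun z => ?_⟩
  · by_cases hz : z ∈ L.lattice
    · have hev : thetaSqP hτ =ᶠ[nhds z] fun w => (dslope (TH 0 τ) z w) ^ 2 +
          TH 0 τ w ^ 2 * (L.weierstrassPExcept z w - 1 / z ^ 2) := by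
        filter_upwards [L.compl_lattice_sdiff_singleton_mem_nhds z] with w hw
        by_cases hwz : w = z
        · subst hwz
          rw [thetaSqP, if_pos hz, dslope_same, (hasDerivAt_TH_z 0 hτ w).deriv,
            TH_zero_of_mem_lattice hτ hz]
          ring
        · have hwL : w ∉ L.lattice := fun h => hw ⟨h, hwz⟩
          have hne : w - z ≠ 0 := sub_ne_zero.mpr hwz
          rw [thetaSqP_of_notMem hτ hwL, ← L.weierstrassPExcept_add ⟨z, hz⟩, dslope_of_ne _ hwz,
            slope_def_field, TH_zero_of_mem_lattice hτ hz]
          field_simp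
          ring
      refine DifferentiableAt.congr_of_eventuallyEq ?_ hev
      have d1 : DifferentiableAt ℂ (dslope (TH 0 τ) z) z :=
        ((differentiableOn_dslope (s := Set.univ) Filter.univ_mem).mpr
          (differentiable_TH 0 hτ).differentiableOn).differentiableAt Filter.univ_mem
      have d2 := (L.analyticAt_weierstrassPExcept z).differentiableAt
      have d3 := differentiable_TH 0 hτ z
      exact (d1.pow 2).add ((d3.pow 2).mul (d2.sub_const _))
    · have hopen : (L.lattice : Set ℂ)ᶜ ∈ nhds z := L.isClosed_lattice.isOpen_compl.mem_nhds hz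
      have hev : thetaSqP hτ =ᶠ[nhds z] fun w => TH 0 τ w ^ 2 * L.weierstrassP w := by
        filter_upwards [hopen] with w hw
        exact thetaSqP_of_notMem hτ hw
      refine DifferentiableAt.congr_of_eventuallyEq ?_ hev
      exact ((differentiable_TH 0 hτ z).pow 2).mul
        (L.differentiableOn_weierstrassP.differentiableAt hopen)
  · by_cases hz : z ∈ L.lattice
    · rw [thetaSqP, thetaSqP, if_pos hz, if_pos ((m1 z).2 hz), TH_add_one]; ring
    · rw [thetaSqP_of_notMem hτ hz, thetaSqP_of_notMem hτ (mt (m1 z).1 hz), TH_add_one]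
      have := L.weierstrassP_add_coe z ⟨1, L.ω₁_mem_lattice⟩
      simp only at this
      rw [this]; ring
  · by_cases hz : z ∈ L.lattice
    · rw [thetaSqP, thetaSqP, if_pos hz, if_pos ((m2 z).2 hz), TH_one_add_tau hτ,
        TH_zero_of_mem_lattice hτ hz]; ring
    · rw [thetaSqP_of_notMem hτ hz, thetaSqP_of_notMem hτ (mt (m2 z).1 hz), TH_zero_add_tau]
      have := L.weierstrassP_add_coe z ⟨τ, L.ω₂_mem_lattice⟩
      simp only at this
      rw [this]; ring

/-! ### The function `p` and the Weierstrass equation -/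

/-- A polynomial that vanishes along a function tending to infinity is zero. -/
lemma poly_eq_zero {ι : Type*} {l : Filter ι} [l.NeBot] {p : ι → ℂ}
    (hp : Filter.Tendsto (fun z => ‖p z‖) l Filter.atTop) {P : Polynomial ℂ}
    (h : ∀ᶠ z in l, P.eval (p z) = 0) : P = 0 := by
  by_contra hne
  obtain ⟨M, hM⟩ := (P.roots.toFinset.finite_toSet.image norm).bddAbove
  obtain ⟨z, hz, hzM⟩ := (h.and (hp.eventually (Filter.eventually_gt_atTop M))).exists
  have : p z ∈ P.roots := by
    rwa [Polynomial.mem_roots hne, Polynomial.IsRoot.def]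
  exact absurd (hM ⟨p z, by simpa using this, rfl⟩) (not_le.mpr hzM)

lemma coeffs_eq_zero {ι : Type*} {l : Filter ι} [l.NeBot] {p : ι → ℂ}
    (hp : Filter.Tendsto (fun z => ‖p z‖) l Filter.atTop) {a b c : ℂ}
    (h : ∀ᶠ z in l, a * p z ^ 2 + b * p z + c = 0) : a = 0 ∧ b = 0 ∧ c = 0 := by
  have hP0 := poly_eq_zero hp (P := .C a * .X ^ 2 + .C b * .X + .C c)
    (by filter_upwards [h] with z hz; simpa using hz)
  have hc : ∀ n, (.C a * .X ^ 2 + .C b * .X + .C c : Polynomial ℂ).coeff n = 0 :=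
    fun n => by rw [hP0, Polynomial.coeff_zero]
  refine ⟨?_, ?_, ?_⟩
  · simpa [Polynomial.coeff_X, Polynomial.coeff_C] using hc 2
  · simpa [Polynomial.coeff_X, Polynomial.coeff_C] using hc 1
  · simpa [Polynomial.coeff_X, Polynomial.coeff_C] using hc 0

lemma TH_eventually_ne {τ : ℂ} (hτ : 0 < τ.im) (z₀ : ℂ) : ∀ᶠ z in nhdsWithin z₀ {z₀}ᶜ,
    TH 0 τ z ≠ 0 := by
  by_contra hc
  obtain ⟨w, hw⟩ := exists_TH_ne_zero hτ
  have hc' : ∃ᶠ z in nhdsWithin z₀ {z₀}ᶜ, TH 0 τ z = 0 := by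
    exact (Filter.not_eventually.mp hc).mono fun z hz => not_not.mp hz
  have han : AnalyticOnNhd ℂ (TH 0 τ) Set.univ :=
    (differentiable_TH 0 hτ).differentiableOn.analyticOnNhd isOpen_univ
  exact hw (han.eqOn_zero_of_preconnected_of_frequently_eq_zero isPreconnected_univ
    (Set.mem_univ _) hc' (Set.mem_univ w))

lemma notMem_of_TH_ne {τ : ℂ} (hτ : 0 < τ.im) {z : ℂ} (hz : TH 0 τ z ≠ 0) :
    z ∉ (perPair hτ).lattice := fun h => hz (TH_zero_of_mem_lattice hτ h)

lemma tendsto_norm_weierstrassP (L : PeriodPair) :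
    Filter.Tendsto (fun z => ‖L.weierstrassP z‖) (nhdsWithin 0 {0}ᶜ) Filter.atTop := by
  have h1 : Filter.Tendsto (fun z : ℂ => ‖z⁻¹ ^ 2‖) (nhdsWithin 0 {0}ᶜ) Filter.atTop := by
    simp only [norm_pow]
    exact (Filter.tendsto_pow_atTop two_ne_zero).comp
      (tendsto_norm_inv_nhdsNE_zero_atTop)
  have h2 : Filter.Tendsto (fun z => ‖L.weierstrassPExcept 0 z‖) (nhdsWithin 0 {0}ᶜ)
      (nhds ‖L.weierstrassPExcept 0 0‖) :=
    ((L.analyticAt_weierstrassPExcept 0).continuousAt.norm).tendsto.mono_left nhdsWithin_le_nhds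
  refine Filter.tendsto_atTop_mono (fun z => ?_) (h1.atTop_add h2.neg)
  have := L.weierstrassPExcept_add 0 z
  simp only [ZeroMemClass.coe_zero, sub_zero, ne_eq, OfNat.ofNat_ne_zero, not_false_eq_true,
    zero_pow, div_zero] at this
  rw [← this, inv_pow, ← one_div, add_comm (L.weierstrassPExcept 0 z)]
  exact norm_sub_le_norm_add _ _

/-- `ϑ'(τ,0) ≠ 0`: otherwise `ϑ(z+w)ϑ(z-w)`, `ϑ(z)²` and `ϑ(z)²℘(z)` would be independent elements
of a two-dimensional space. -/
lemma TH_one_zero_ne {τ : ℂ} (hτ : 0 < τ.im) : TH 1 τ 0 ≠ 0 := by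
  intro h1
  obtain ⟨w, hw⟩ := exists_TH_ne_zero hτ
  obtain ⟨α, β, γ, hne, hall⟩ := (isTheta2_thetaSqP hτ).dependent (isTheta2_sq hτ)
    (isTheta2_translate hτ w)
  have hγ : γ = 0 := by
    have h0 := hall 0
    have hF : thetaSqP hτ 0 = 0 := by
      rw [thetaSqP, if_pos (Submodule.zero_mem _), h1]; ring
    have := TH_neg 0 τ w
    rw [hF, TH_zero_zero, zero_add, zero_sub, this] at h0
    have : γ * TH 0 τ w ^ 2 = 0 := by linear_combination -h0
    simpa [hw] using this
  have hev : ∀ᶠ z in nhdsWithin (0 : ℂ) {0}ᶜ, 0 * (perPair hτ).weierstrassP z ^ 2 +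
      α * (perPair hτ).weierstrassP z + β = 0 := by
    filter_upwards [TH_eventually_ne hτ 0] with z hz
    have := hall z
    rw [thetaSqP_of_notMem hτ (notMem_of_TH_ne hτ hz), hγ] at this
    apply mul_left_cancel₀ (pow_ne_zero 2 hz)
    linear_combination this
  obtain ⟨-, hα, hβ⟩ := coeffs_eq_zero (tendsto_norm_weierstrassP _) hev
  simp [hα, hβ, hγ] at hne

/-- `12 ∂² log ϑ`, where `∂ = (2πi)⁻¹ d/dz`. -/
def Xf (τ z : ℂ) : ℂ := 12 * (TH 0 τ z * TH 2 τ z - TH 1 τ z ^ 2) / TH 0 τ z ^ 2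

/-- `-12 ∂³ log ϑ`, where `∂ = (2πi)⁻¹ d/dz`. -/
def Qf (τ z : ℂ) : ℂ := -12 * (TH 0 τ z ^ 2 * TH 3 τ z - 3 * TH 0 τ z * TH 1 τ z * TH 2 τ z
  + 2 * TH 1 τ z ^ 3) / TH 0 τ z ^ 3

lemma hasDerivAt_Xf_z {τ : ℂ} (hτ : 0 < τ.im) {z : ℂ} (hz : TH 0 τ z ≠ 0) :
    HasDerivAt (Xf τ) (-(2 * π * I) * Qf τ z) z := by
  have h0 := hasDerivAt_TH_z 0 hτ z
  have h1 := hasDerivAt_TH_z 1 hτ z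
  have h2 := hasDerivAt_TH_z 2 hτ z
  refine ((((h0.fun_mul h2).fun_sub (h1.fun_pow 2)).const_mul 12).fun_div (h0.fun_pow 2)
    (pow_ne_zero 2 hz)).congr_deriv ?_
  simp only [Qf, zero_add, Nat.reduceAdd]
  field_simp
  push_cast
  ring

/-- Existence of the constant `e₂` with `-(3/π²)℘ = e₂ - 12 ∂² log ϑ`. -/
lemma exists_weierstrassP_eq {τ : ℂ} (hτ : 0 < τ.im) : ∃ e : ℂ, ∀ z, TH 0 τ z ≠ 0 →
    -(3 / π ^ 2) * (perPair hτ).weierstrassP z = e - Xf τ z := by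
  obtain ⟨α, β, γ, hne, hall⟩ := (isTheta2_wronskian hτ).dependent (isTheta2_thetaSqP hτ)
    (isTheta2_sq hτ)
  have hα : α = -4 * π ^ 2 * β := by
    have h0 := hall 0
    have hF : thetaSqP hτ 0 = (2 * π * I * TH 1 τ 0) ^ 2 := by
      rw [thetaSqP, if_pos (Submodule.zero_mem _)]
    rw [hF, TH_zero_zero] at h0
    apply mul_right_cancel₀ (pow_ne_zero 2 (TH_one_zero_ne hτ))
    linear_combination -h0 + 4 * β * π ^ 2 * TH 1 τ 0 ^ 2 * I_sq
  have hβ : β ≠ 0 := by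
    rintro rfl
    obtain ⟨w, hw⟩ := exists_TH_ne_zero hτ
    have := hall w
    simp [hα, hw] at this
    simp [hα, this] at hne
  refine ⟨3 / π ^ 2 * (γ / β), fun z hz => ?_⟩
  have := hall z
  rw [thetaSqP_of_notMem hτ (notMem_of_TH_ne hτ hz), hα] at this
  have hπ : (π : ℂ) ≠ 0 := by exact_mod_cast Real.pi_ne_zero
  rw [Xf]
  field_simp
  linear_combination -3 * this

/-- The quasi-modular form `e₂`, characterised by `-(3/π²)℘ = e₂ - 12 ∂² log ϑ`;
it is shown below to be `E₂`. -/
def e2 (τ : ℂ) : ℂ := if hτ : 0 < τ.im then (exists_weierstrassP_eq hτ).choose else 0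

lemma weierstrassP_eq {τ : ℂ} (hτ : 0 < τ.im) {z : ℂ} (hz : TH 0 τ z ≠ 0) :
    -(3 / π ^ 2) * (perPair hτ).weierstrassP z = e2 τ - Xf τ z := by
  rw [e2, dif_pos hτ]
  exact (exists_weierstrassP_eq hτ).choose_spec z hz

lemma tendsto_norm_p {τ : ℂ} (hτ : 0 < τ.im) :
    Filter.Tendsto (fun z => ‖e2 τ - Xf τ z‖) (nhdsWithin 0 {0}ᶜ) Filter.atTop := by
  have h := (tendsto_norm_weierstrassP (perPair hτ)).const_mul_atTop
    (show 0 < ‖(-(3 / π ^ 2) : ℂ)‖ by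
      simp only [norm_neg, norm_pos_iff]
      simp)
  refine h.congr' ?_
  filter_upwards [TH_eventually_ne hτ 0] with z hz
  rw [← weierstrassP_eq hτ hz, norm_mul]

/-- The Weierstrass equation for `p = e₂ - 12 ∂² log ϑ`. -/
lemma weierstrass_ode {τ : ℂ} (hτ : 0 < τ.im) {z : ℂ} (hz : TH 0 τ z ≠ 0) :
    Qf τ z ^ 2 = (e2 τ - Xf τ z) ^ 3 / 3 -
      (3 * (perPair hτ).g₂ / (4 * π ^ 4)) * (e2 τ - Xf τ z) +
      2 / 3 * (27 * (perPair hτ).g₃ / (8 * π ^ 6)) := by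
  set L := perPair hτ
  have hπ : (π : ℂ) ≠ 0 := by exact_mod_cast Real.pi_ne_zero
  have hzL := notMem_of_TH_ne hτ hz
  have hopen : (L.lattice : Set ℂ)ᶜ ∈ nhds z := L.isClosed_lattice.isOpen_compl.mem_nhds hzL
  have hd : HasDerivAt L.weierstrassP (L.derivWeierstrassP z) z := by
    rw [← L.deriv_weierstrassP]
    exact (L.differentiableOn_weierstrassP.differentiableAt hopen).hasDerivAt
  have hne : ∀ᶠ w in nhds z, TH 0 τ w ≠ 0 :=
    (differentiable_TH 0 hτ).continuous.continuousAt.eventually_ne hz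
  have h1 : HasDerivAt (fun w => e2 τ - Xf τ w) (-(3 / π ^ 2) * L.derivWeierstrassP z) z := by
    refine (hd.const_mul (-(3 / (π : ℂ) ^ 2))).congr_of_eventuallyEq ?_
    filter_upwards [hne] with w hw
    exact (weierstrassP_eq hτ hw).symm
  have h2 := h1.unique ((hasDerivAt_Xf_z hτ hz).const_sub (e2 τ))
  have h3 := L.derivWeierstrassP_sq z hzL
  have h4 := weierstrassP_eq hτ hz
  have h5 : L.weierstrassP z = -(π ^ 2 / 3) * (e2 τ - Xf τ z) := by
    rw [← h4]; field_simp; rfl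
  have h6 : L.derivWeierstrassP z = -(π ^ 2 / 3) * (2 * π * I * Qf τ z) := by
    have : L.derivWeierstrassP z = -(π ^ 2 / 3) * (-(3 / π ^ 2) * L.derivWeierstrassP z) := by
      field_simp
    rw [this, h2]; ring
  rw [h5, h6] at h3
  have h7 : (-(π ^ 2 / 3) * (2 * π * I * Qf τ z)) ^ 2 = -(4 * π ^ 6 / 9) * Qf τ z ^ 2 := by
    linear_combination (4 * π ^ 6 / 9) * Qf τ z ^ 2 * I_sq
  rw [h7] at h3
  field_simp
  field_simp at h3
  linear_combination -8 / 9 * h3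

/-! ### Eisenstein series, the eta function and lattice invariants -/

lemma sigmaD_eq (k n : ℕ) : sigmaD k n = ArithmeticFunction.sigma k n := by
  rw [sigmaD, ArithmeticFunction.sigma_apply]

lemma tsum_sigma_eq (k : ℕ) (τ : ℂ) :
    ∑' n : ℕ+, (ArithmeticFunction.sigma k n : ℂ) * cexp (2 * π * I * τ) ^ (n : ℕ) =
      ∑' n : ℕ, (sigmaD k (n + 1) : ℂ) * cexp (2 * π * I * τ * (n + 1)) := by
  rw [tsum_pnat_eq_tsum_succ
    (f := fun n => (ArithmeticFunction.sigma k n : ℂ) * cexp (2 * π * I * τ) ^ n)]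
  refine tsum_congr fun n => ?_
  rw [sigmaD_eq, ← Complex.exp_nat_mul]
  congr 2
  push_cast; ring

lemma Eis2_eq (z : UpperHalfPlane) : EisensteinSeries.E2 z = Eis2 z := by
  rw [EisensteinSeries.E2_eq_tsum_cexp, Eis2, ← tsum_sigma_eq]

lemma Eis4_eq (z : UpperHalfPlane) : ModularForm.E₄ z = Eis4 z := by
  rw [EisensteinSeries.q_expansion_bernoulli _ ⟨2, rfl⟩, Eis4, ← tsum_sigma_eq,
    show bernoulli 4 = -1 / 30 by decide +kernel]
  norm_num

lemma Eis6_eq (z : UpperHalfPlane) : ModularForm.E₆ z = Eis6 z := by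
  rw [EisensteinSeries.q_expansion_bernoulli _ ⟨3, rfl⟩, Eis6, ← tsum_sigma_eq,
    show bernoulli 6 = 1 / 42 by decide +kernel]
  norm_num

lemma etaD_eq (τ : ℂ) : etaD τ = ModularForm.eta τ := by
  rw [etaD, ModularForm.eta]
  simp only [ModularForm.eta_q_eq_cexp, Function.Periodic.qParam]
  congr 1
  · congr 1; push_cast; ring
  · refine tprod_congr fun n => ?_
    congr 2; ring

lemma etaD_ne_zero {τ : ℂ} (hτ : 0 < τ.im) : etaD τ ≠ 0 := by
  rw [etaD_eq]; exact ModularForm.eta_ne_zero hτ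

lemma hasDerivAt_etaD {τ : ℂ} (hτ : 0 < τ.im) :
    HasDerivAt etaD (2 * π * I * (Eis2 τ * etaD τ / 24)) τ := by
  have h0 : etaD = ModularForm.eta := funext etaD_eq
  have h1 : DifferentiableAt ℂ ModularForm.eta τ :=
    ModularForm.differentiableAt_eta_of_mem_upperHalfPlaneSet hτ
  have h2 := ModularForm.logDeriv_eta_eq_E2 ⟨τ, hτ⟩
  have h3 : (ModularForm.eta τ) ≠ 0 := ModularForm.eta_ne_zero hτ
  rw [Eis2_eq, logDeriv_apply, div_eq_iff h3] at h2
  rw [h0]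
  refine h1.hasDerivAt.congr_deriv ?_
  have h4 : deriv ModularForm.eta τ = π * I / 12 * Eis2 τ * ModularForm.eta τ := h2
  rw [h4]; ring

lemma differentiableAt_Eis4 {τ : ℂ} (hτ : 0 < τ.im) : DifferentiableAt ℂ Eis4 τ := by
  have h := UpperHalfPlane.mdifferentiable_iff.mp ModularForm.E₄.holo'
  have hopen : {z : ℂ | 0 < z.im} ∈ nhds τ := (isOpen_lt continuous_const continuous_im).mem_nhds hτ
  refine (h.differentiableAt hopen).congr_of_eventuallyEq ?_
  filter_upwards [hopen] with t ht
  change _ = ModularForm.E₄ (UpperHalfPlane.ofComplex t)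
  rw [Eis4_eq, UpperHalfPlane.ofComplex_apply_of_im_pos ht]

lemma differentiableAt_Eis6 {τ : ℂ} (hτ : 0 < τ.im) : DifferentiableAt ℂ Eis6 τ := by
  have h := UpperHalfPlane.mdifferentiable_iff.mp ModularForm.E₆.holo'
  have hopen : {z : ℂ | 0 < z.im} ∈ nhds τ := (isOpen_lt continuous_const continuous_im).mem_nhds hτ
  refine (h.differentiableAt hopen).congr_of_eventuallyEq ?_
  filter_upwards [hopen] with t ht
  change _ = ModularForm.E₆ (UpperHalfPlane.ofComplex t)
  rw [Eis6_eq, UpperHalfPlane.ofComplex_apply_of_im_pos ht]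

lemma disc_eq {τ : ℂ} (hτ : 0 < τ.im) : Eis4 τ ^ 3 - Eis6 τ ^ 2 = 1728 * etaD τ ^ 24 := by
  have h := ModularForm.discriminant_eq_E₄_cube_sub_E₆_sq ⟨τ, hτ⟩
  rw [Eis4_eq, Eis6_eq] at h
  have h2 : ModularForm.discriminant ⟨τ, hτ⟩ = etaD τ ^ 24 := by
    rw [etaD_eq]; rfl
  rw [h2] at h
  simp only at h
  rw [h]; ring

lemma G_eq {τ : ℂ} (hτ : 0 < τ.im) {k : ℕ} (hk : 3 ≤ k) (hk2 : Even k) :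
    (perPair hτ).G k = 2 * riemannZeta k + 2 * ((-2 * π * I) ^ k / (k - 1).factorial) *
      ∑' n : ℕ, (sigmaD (k - 1) (n + 1) : ℂ) * cexp (2 * π * I * τ * (n + 1)) := by
  rw [← tsum_sigma_eq]
  refine Eq.trans ?_
    (tsum_eisSummand_eq_tsum_sigma_mul_cexp_pow hk hk2 ⟨τ, hτ⟩)
  rw [PeriodPair.G, ← (perPair hτ).latticeEquivProd.symm.toEquiv.tsum_eq,
    ← (Equiv.prodComm ℤ ℤ).tsum_eq, ← (finTwoArrowEquiv ℤ).tsum_eq]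
  refine tsum_congr fun v => ?_
  change (((((perPair hτ).latticeEquivProd.symm (v 1, v 0)).1) : ℂ) ^ k)⁻¹ = _
  rw [PeriodPair.latticeEquiv_symm_apply, EisensteinSeries.eisSummand, zpow_neg, zpow_natCast]
  change (((v 1 : ℂ) * 1 + v 0 * τ) ^ k)⁻¹ = ((v 0 * τ + v 1) ^ k)⁻¹
  congr 2; ring

lemma e4_eq {τ : ℂ} (hτ : 0 < τ.im) : 3 * (perPair hτ).g₂ / (4 * π ^ 4) = Eis4 τ := by
  have hπ : (π : ℂ) ≠ 0 := by exact_mod_cast Real.pi_ne_zero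
  rw [PeriodPair.g₂, G_eq hτ (by norm_num : 3 ≤ 4) ⟨2, rfl⟩, Eis4]
  set S := ∑' n : ℕ, (sigmaD (4 - 1) (n + 1) : ℂ) * cexp (2 * π * I * τ * (n + 1)) with hS
  have hI : (-2 * π * I) ^ 4 = 16 * π ^ 4 := by
    rw [mul_pow, mul_pow, I_pow_four]; ring
  have h3 : (((4 - 1).factorial : ℕ) : ℂ) = 6 := by norm_num [Nat.factorial]
  have h4 : riemannZeta ((4 : ℕ) : ℂ) = π ^ 4 / 90 := by exact_mod_cast riemannZeta_four
  rw [hI, h3, h4]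
  field_simp
  ring

lemma riemannZeta_six : riemannZeta 6 = π ^ 6 / 945 := by
  have h := riemannZeta_two_mul_nat (k := 3) (by norm_num)
  rw [show bernoulli (2 * 3) = 1 / 42 by decide +kernel] at h
  norm_num [Nat.factorial] at h
  rw [h]; ring

lemma e6_eq {τ : ℂ} (hτ : 0 < τ.im) : 27 * (perPair hτ).g₃ / (8 * π ^ 6) = Eis6 τ := by
  have hπ : (π : ℂ) ≠ 0 := by exact_mod_cast Real.pi_ne_zero
  rw [PeriodPair.g₃, G_eq hτ (by norm_num : 3 ≤ 6) ⟨3, rfl⟩, Eis6]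
  set S := ∑' n : ℕ, (sigmaD (6 - 1) (n + 1) : ℂ) * cexp (2 * π * I * τ * (n + 1)) with hS
  have hI : (-2 * π * I) ^ 6 = -64 * π ^ 6 := by
    rw [mul_pow, mul_pow, show I ^ 6 = I ^ 4 * I ^ 2 by ring, I_pow_four, I_sq]; ring
  have h5 : (((6 - 1).factorial : ℕ) : ℂ) = 120 := by norm_num [Nat.factorial]
  have h6 : riemannZeta ((6 : ℕ) : ℂ) = π ^ 6 / 945 := by exact_mod_cast riemannZeta_six
  rw [hI, h5, h6]
  field_simp
  ring

lemma ode {τ : ℂ} (hτ : 0 < τ.im) {z : ℂ} (hz : TH 0 τ z ≠ 0) :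
    Qf τ z ^ 2 = (e2 τ - Xf τ z) ^ 3 / 3 - Eis4 τ * (e2 τ - Xf τ z) + 2 / 3 * Eis6 τ := by
  rw [weierstrass_ode hτ hz, e4_eq, e6_eq]

/-! ### The differential ring of `p` and Ramanujan's identities -/

/-- `-12 ∂⁴ log ϑ`, where `∂ = (2πi)⁻¹ d/dz`. -/
def Rf (τ z : ℂ) : ℂ := -12 * (TH 0 τ z ^ 3 * TH 4 τ z - 4 * TH 0 τ z ^ 2 * TH 1 τ z * TH 3 τ z
  - 3 * TH 0 τ z ^ 2 * TH 2 τ z ^ 2 + 12 * TH 0 τ z * TH 1 τ z ^ 2 * TH 2 τ z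
  - 6 * TH 1 τ z ^ 4) / TH 0 τ z ^ 4

/-- `-12 ∂⁵ log ϑ`, where `∂ = (2πi)⁻¹ d/dz`. -/
def Sf (τ z : ℂ) : ℂ := -12 * (TH 0 τ z ^ 4 * TH 5 τ z - 5 * TH 0 τ z ^ 3 * TH 1 τ z * TH 4 τ z
  - 10 * TH 0 τ z ^ 3 * TH 2 τ z * TH 3 τ z + 20 * TH 0 τ z ^ 2 * TH 1 τ z ^ 2 * TH 3 τ z
  + 30 * TH 0 τ z ^ 2 * TH 1 τ z * TH 2 τ z ^ 2 - 60 * TH 0 τ z * TH 1 τ z ^ 3 * TH 2 τ z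
  + 24 * TH 1 τ z ^ 5) / TH 0 τ z ^ 5

lemma hasDerivAt_Qf_z {τ : ℂ} (hτ : 0 < τ.im) {z : ℂ} (hz : TH 0 τ z ≠ 0) :
    HasDerivAt (Qf τ) (2 * π * I * Rf τ z) z := by
  have h0 := hasDerivAt_TH_z 0 hτ z
  have h1 := hasDerivAt_TH_z 1 hτ z
  have h2 := hasDerivAt_TH_z 2 hτ z
  have h3 := hasDerivAt_TH_z 3 hτ z
  refine (((((h0.fun_pow 2).fun_mul h3).fun_sub (((h0.const_mul 3).fun_mul h1).fun_mul h2)).fun_add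
    ((h1.fun_pow 3).const_mul 2)).const_mul (-12) |>.fun_div (h0.fun_pow 3)
    (pow_ne_zero 3 hz)).congr_deriv ?_
  simp only [Rf, zero_add, Nat.reduceAdd]
  field_simp
  push_cast
  ring

lemma hasDerivAt_Rf_z {τ : ℂ} (hτ : 0 < τ.im) {z : ℂ} (hz : TH 0 τ z ≠ 0) :
    HasDerivAt (Rf τ) (2 * π * I * Sf τ z) z := by
  have h0 := hasDerivAt_TH_z 0 hτ z
  have h1 := hasDerivAt_TH_z 1 hτ z
  have h2 := hasDerivAt_TH_z 2 hτ z
  have h3 := hasDerivAt_TH_z 3 hτ z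
  have h4 := hasDerivAt_TH_z 4 hτ z
  refine (((((((h0.fun_pow 3).fun_mul h4).fun_sub
    ((((h0.fun_pow 2).const_mul 4).fun_mul h1).fun_mul h3)).fun_sub
    (((h0.fun_pow 2).const_mul 3).fun_mul (h2.fun_pow 2))).fun_add
    (((h0.const_mul 12).fun_mul (h1.fun_pow 2)).fun_mul h2)).fun_sub
    ((h1.fun_pow 4).const_mul 6)).const_mul (-12) |>.fun_div (h0.fun_pow 4)
    (pow_ne_zero 4 hz)).congr_deriv ?_
  simp only [Sf, zero_add, Nat.reduceAdd]
  field_simp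
  push_cast
  ring

/-- The heat equation for `ϑ` turned into an equation for `12 ∂² log ϑ`. -/
lemma hasDerivAt_Xf_tau {τ : ℂ} (hτ : 0 < τ.im) {z : ℂ} (hz : TH 0 τ z ≠ 0) :
    HasDerivAt (fun t => Xf t z) (2 * π * I *
      (-Rf τ z / 2 + Xf τ z ^ 2 / 12 - TH 1 τ z / TH 0 τ z * Qf τ z)) τ := by
  have h0 := hasDerivAt_TH_tau 0 hτ z
  have h1 := hasDerivAt_TH_tau 1 hτ z
  have h2 := hasDerivAt_TH_tau 2 hτ z
  refine ((((h0.fun_mul h2).fun_sub (h1.fun_pow 2)).const_mul 12).fun_div (h0.fun_pow 2)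
    (pow_ne_zero 2 hz)).congr_deriv ?_
  simp only [Xf, Qf, Rf, zero_add, Nat.reduceAdd]
  field_simp
  push_cast
  ring

lemma hasDerivAt_Qf_tau {τ : ℂ} (hτ : 0 < τ.im) {z : ℂ} (hz : TH 0 τ z ≠ 0) :
    HasDerivAt (fun t => Qf t z) (2 * π * I *
      (Sf τ z / 2 + Xf τ z * Qf τ z / 4 + TH 1 τ z / TH 0 τ z * Rf τ z)) τ := by
  have h0 := hasDerivAt_TH_tau 0 hτ z
  have h1 := hasDerivAt_TH_tau 1 hτ z
  have h2 := hasDerivAt_TH_tau 2 hτ z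
  have h3 := hasDerivAt_TH_tau 3 hτ z
  refine (((((h0.fun_pow 2).fun_mul h3).fun_sub (((h0.const_mul 3).fun_mul h1).fun_mul h2)).fun_add
    ((h1.fun_pow 3).const_mul 2)).const_mul (-12) |>.fun_div (h0.fun_pow 3)
    (pow_ne_zero 3 hz)).congr_deriv ?_
  simp only [Xf, Qf, Rf, Sf, zero_add, Nat.reduceAdd]
  field_simp
  push_cast
  ring

lemma differentiableAt_Sf_tau {τ : ℂ} (hτ : 0 < τ.im) {z : ℂ} (hz : TH 0 τ z ≠ 0) :
    DifferentiableAt ℂ (fun t => Sf t z) τ := by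
  have h0 := (hasDerivAt_TH_tau 0 hτ z).differentiableAt
  have h1 := (hasDerivAt_TH_tau 1 hτ z).differentiableAt
  have h2 := (hasDerivAt_TH_tau 2 hτ z).differentiableAt
  have h3 := (hasDerivAt_TH_tau 3 hτ z).differentiableAt
  have h4 := (hasDerivAt_TH_tau 4 hτ z).differentiableAt
  have h5 := (hasDerivAt_TH_tau 5 hτ z).differentiableAt
  simp only [Sf]
  have h6 := pow_ne_zero 5 hz
  fun_prop (disch := assumption)

lemma two_pi_I_ne : (2 * π * I : ℂ) ≠ 0 := Complex.two_pi_I_ne_zero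

/-- `∂p` is not identically zero, so it vanishes only at isolated points. -/
lemma good_eventually {τ : ℂ} (hτ : 0 < τ.im) (z₀ : ℂ) : ∀ᶠ z in nhdsWithin z₀ {z₀}ᶜ,
    TH 0 τ z ≠ 0 ∧ Qf τ z ≠ 0 := by
  set N : ℂ → ℂ := fun z => TH 0 τ z ^ 2 * TH 3 τ z - 3 * TH 0 τ z * TH 1 τ z * TH 2 τ z
    + 2 * TH 1 τ z ^ 3 with hN
  have hQ : ∀ z, Qf τ z = -12 * N z / TH 0 τ z ^ 3 := fun z => rfl
  have hNd : Differentiable ℂ N := by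
    have h0 := differentiable_TH 0 hτ
    have h1 := differentiable_TH 1 hτ
    have h2 := differentiable_TH 2 hτ
    have h3 := differentiable_TH 3 hτ
    fun_prop
  have hNan : AnalyticOnNhd ℂ N Set.univ := hNd.differentiableOn.analyticOnNhd isOpen_univ
  have hNne : ∀ᶠ z in nhdsWithin z₀ {z₀}ᶜ, N z ≠ 0 := by
    by_contra hc
    have hc' : ∃ᶠ z in nhdsWithin z₀ {z₀}ᶜ, N z = 0 :=
      (Filter.not_eventually.mp hc).mono fun z hz => not_not.mp hz
    have hall : ∀ z, N z = 0 := fun z =>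
      hNan.eqOn_zero_of_preconnected_of_frequently_eq_zero isPreconnected_univ
        (Set.mem_univ _) hc' (Set.mem_univ z)
    -- then the cubic in the Weierstrass equation vanishes at values of `p` tending to infinity
    have hzero := poly_eq_zero (tendsto_norm_p hτ)
      (P := .C (1 / 3) * .X ^ 3 - .C (Eis4 τ) * .X + .C (2 / 3 * Eis6 τ)) (by
        filter_upwards [TH_eventually_ne hτ 0] with z hz
        have := ode hτ hz
        rw [hQ, hall] at this
        simp only [Polynomial.eval_add, Polynomial.eval_sub, Polynomial.eval_mul,
          Polynomial.eval_C, Polynomial.eval_pow, Polynomial.eval_X]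
        linear_combination -this)
    have := congrArg (fun P => P.coeff 3) hzero
    simp at this
  filter_upwards [hNne, TH_eventually_ne hτ z₀] with z h1 h2
  refine ⟨h2, ?_⟩
  rw [hQ]
  have := pow_ne_zero 3 h2
  simp [h1, h2]

lemma good_nhds {τ : ℂ} (hτ : 0 < τ.im) {z : ℂ} (hz : TH 0 τ z ≠ 0) (hQ : Qf τ z ≠ 0) :
    ∀ᶠ w in nhds z, TH 0 τ w ≠ 0 ∧ Qf τ w ≠ 0 :=
  ((differentiable_TH 0 hτ).continuous.continuousAt.eventually_ne hz).and
    ((hasDerivAt_Qf_z hτ hz).continuousAt.eventually_ne hQ)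

/-- `∂²p = p²/2 - E₄/2`. -/
lemma Rf_eq {τ : ℂ} (hτ : 0 < τ.im) {z : ℂ} (hz : TH 0 τ z ≠ 0) (hQ : Qf τ z ≠ 0) :
    Rf τ z = (e2 τ - Xf τ z) ^ 2 / 2 - Eis4 τ / 2 := by
  have hX := (hasDerivAt_Xf_z hτ hz).const_sub (e2 τ)
  have h1 := (hasDerivAt_Qf_z hτ hz).fun_pow 2
  have h2 := (((hX.fun_pow 3).div_const 3).fun_sub (hX.const_mul (Eis4 τ))).add_const
    (2 / 3 * Eis6 τ)
  have h3 := h1.unique (h2.congr_of_eventuallyEq (by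
    filter_upwards [good_nhds hτ hz hQ] with w hw using ode hτ hw.1))
  apply mul_left_cancel₀ (mul_ne_zero two_pi_I_ne hQ)
  push_cast at h3
  linear_combination h3 / 2

/-- `∂³p = p ∂p`. -/
lemma Sf_eq {τ : ℂ} (hτ : 0 < τ.im) {z : ℂ} (hz : TH 0 τ z ≠ 0) (hQ : Qf τ z ≠ 0) :
    Sf τ z = (e2 τ - Xf τ z) * Qf τ z := by
  have hX := (hasDerivAt_Xf_z hτ hz).const_sub (e2 τ)
  have h1 := hasDerivAt_Rf_z hτ hz
  have h2 := ((hX.fun_pow 2).div_const 2).sub_const (Eis4 τ / 2)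
  have h3 := h1.unique (h2.congr_of_eventuallyEq (by
    filter_upwards [good_nhds hτ hz hQ] with w hw using Rf_eq hτ hw.1 hw.2))
  apply mul_left_cancel₀ two_pi_I_ne
  push_cast at h3
  linear_combination h3

lemma upper_mem_nhds {τ : ℂ} (hτ : 0 < τ.im) : ∀ᶠ t : ℂ in nhds τ, 0 < t.im :=
  (isOpen_lt continuous_const continuous_im).mem_nhds hτ

lemma good_nhds_tau {τ : ℂ} (hτ : 0 < τ.im) {z : ℂ} (hz : TH 0 τ z ≠ 0) (hQ : Qf τ z ≠ 0) :
    ∀ᶠ t in nhds τ, 0 < t.im ∧ TH 0 t z ≠ 0 ∧ Qf t z ≠ 0 :=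
  (upper_mem_nhds hτ).and
    (((hasDerivAt_TH_tau 0 hτ z).continuousAt.eventually_ne hz).and
      ((hasDerivAt_Qf_tau hτ hz).continuousAt.eventually_ne hQ))

/-- `e₂` is holomorphic, because `e₂ = ∂³p/∂p + 12 ∂² log ϑ` at any fixed `z`. -/
lemma differentiableAt_e2 {τ : ℂ} (hτ : 0 < τ.im) : DifferentiableAt ℂ e2 τ := by
  obtain ⟨z, hz, hQ⟩ := (good_eventually hτ 0).exists
  have h : DifferentiableAt ℂ (fun t => Sf t z / Qf t z + Xf t z) τ :=
    ((differentiableAt_Sf_tau hτ hz).fun_div (hasDerivAt_Qf_tau hτ hz).differentiableAt hQ).fun_add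
      (hasDerivAt_Xf_tau hτ hz).differentiableAt
  refine h.congr_of_eventuallyEq ?_
  filter_upwards [good_nhds_tau hτ hz hQ] with t ht
  rw [Sf_eq ht.1 ht.2.1 ht.2.2, mul_div_cancel_right₀ _ ht.2.2]
  ring

/-- Ramanujan's identities, with `e₂` in place of `E₂`: differentiating the Weierstrass equation
in `τ` by means of the heat equation gives a quadratic polynomial in `p` that vanishes for all
`z`. -/
lemma ramanujan_e2 {τ : ℂ} (hτ : 0 < τ.im) :
    HasDerivAt e2 (2 * π * I * ((e2 τ ^ 2 - Eis4 τ) / 12)) τ ∧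
    HasDerivAt Eis4 (2 * π * I * ((e2 τ * Eis4 τ - Eis6 τ) / 3)) τ ∧
    HasDerivAt Eis6 (2 * π * I * ((e2 τ * Eis6 τ - Eis4 τ ^ 2) / 2)) τ := by
  obtain ⟨d2, hd2⟩ : ∃ d, deriv e2 τ = 2 * π * I * d :=
    ⟨deriv e2 τ / (2 * π * I), (mul_div_cancel₀ _ two_pi_I_ne).symm⟩
  obtain ⟨d4, hd4⟩ : ∃ d, deriv Eis4 τ = 2 * π * I * d :=
    ⟨deriv Eis4 τ / (2 * π * I), (mul_div_cancel₀ _ two_pi_I_ne).symm⟩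
  obtain ⟨d6, hd6⟩ : ∃ d, deriv Eis6 τ = 2 * π * I * d :=
    ⟨deriv Eis6 τ / (2 * π * I), (mul_div_cancel₀ _ two_pi_I_ne).symm⟩
  have H2 : HasDerivAt e2 (2 * π * I * d2) τ := hd2 ▸ (differentiableAt_e2 hτ).hasDerivAt
  have H4 : HasDerivAt Eis4 (2 * π * I * d4) τ := hd4 ▸ (differentiableAt_Eis4 hτ).hasDerivAt
  have H6 : HasDerivAt Eis6 (2 * π * I * d6) τ := hd6 ▸ (differentiableAt_Eis6 hτ).hasDerivAt
  have key : ∀ᶠ z in nhdsWithin (0 : ℂ) {0}ᶜ,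
      (d2 - e2 τ ^ 2 / 12 + Eis4 τ / 12) * (e2 τ - Xf τ z) ^ 2 +
      (-d4 - Eis6 τ / 3 + e2 τ * Eis4 τ / 3) * (e2 τ - Xf τ z) +
      (-Eis4 τ * d2 + Eis4 τ ^ 2 / 4 + Eis4 τ * e2 τ ^ 2 / 12 + 2 / 3 * d6
        - e2 τ * Eis6 τ / 3) = 0 := by
    filter_upwards [good_eventually hτ 0] with z hz
    obtain ⟨hz, hQ⟩ := hz
    have hP := H2.fun_sub (hasDerivAt_Xf_tau hτ hz)
    have h1 := (hasDerivAt_Qf_tau hτ hz).fun_pow 2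
    have h2 := (((hP.fun_pow 3).div_const 3).fun_sub (H4.fun_mul hP)).fun_add
      (H6.const_mul (2 / 3))
    have h3 := h1.unique (h2.congr_of_eventuallyEq (by
      filter_upwards [good_nhds_tau hτ hz hQ] with t ht using ode ht.1 ht.2.1))
    rw [Sf_eq hτ hz hQ, Rf_eq hτ hz hQ] at h3
    have ho := ode hτ hz
    push_cast at h3
    apply mul_left_cancel₀ two_pi_I_ne
    generalize TH 1 τ z / TH 0 τ z = J at h3
    generalize Qf τ z = Q at h3 ho
    generalize Xf τ z = X at h3 ho ⊢
    linear_combination -h3 + 2 * π * I * (e2 τ - X + X / 2) * ho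
  obtain ⟨ha, hb, hc⟩ := coeffs_eq_zero (tendsto_norm_p hτ) key
  refine ⟨H2.congr_deriv ?_, H4.congr_deriv ?_, H6.congr_deriv ?_⟩
  · linear_combination 2 * π * I * ha
  · linear_combination -2 * π * I * hb
  · linear_combination 2 * π * I * (3 / 2) * (hc + Eis4 τ * ha)

/-- `e₂ = E₂`, since both are the logarithmic derivative of `E₄³ - E₆² = 1728 η²⁴`. -/
lemma e2_eq {τ : ℂ} (hτ : 0 < τ.im) : e2 τ = Eis2 τ := by
  obtain ⟨-, H4, H6⟩ := ramanujan_e2 hτ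
  have h1 := (H4.fun_pow 3).fun_sub (H6.fun_pow 2)
  have h2 := ((hasDerivAt_etaD hτ).fun_pow 24).const_mul 1728
  have h3 := h1.unique (h2.congr_of_eventuallyEq (by
    filter_upwards [upper_mem_nhds hτ] with t ht using disc_eq ht))
  have h4 := disc_eq hτ
  apply mul_left_cancel₀ (mul_ne_zero two_pi_I_ne (pow_ne_zero 24 (etaD_ne_zero hτ)))
  push_cast at h3
  linear_combination h3 / 1728 - 2 * π * I * e2 τ / 1728 * h4

lemma hasDerivAt_Eis2 {τ : ℂ} (hτ : 0 < τ.im) :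
    HasDerivAt Eis2 (2 * π * I * ((Eis2 τ ^ 2 - Eis4 τ) / 12)) τ := by
  rw [← e2_eq hτ]
  refine (ramanujan_e2 hτ).1.congr_of_eventuallyEq ?_
  filter_upwards [upper_mem_nhds hτ] with t ht using (e2_eq ht).symm

lemma hasDerivAt_Eis4 {τ : ℂ} (hτ : 0 < τ.im) :
    HasDerivAt Eis4 (2 * π * I * ((Eis2 τ * Eis4 τ - Eis6 τ) / 3)) τ := by
  rw [← e2_eq hτ]
  exact (ramanujan_e2 hτ).2.1

lemma hasDerivAt_Eis6 {τ : ℂ} (hτ : 0 < τ.im) :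
    HasDerivAt Eis6 (2 * π * I * ((Eis2 τ * Eis6 τ - Eis4 τ ^ 2) / 2)) τ := by
  rw [← e2_eq hτ]
  exact (ramanujan_e2 hτ).2.2

/-! ### The heat operators on quadratic polynomials in `φ_{0,1}` and `φ_{-2,1}` -/

/-- The numerator `E₂ ϑ² - 12(ϑ ∂²ϑ - (∂ϑ)²)` of `φ_{0,1}`. -/
def numA (τ z : ℂ) : ℂ :=
  Eis2 τ * TH 0 τ z ^ 2 - 12 * TH 0 τ z * TH 2 τ z + 12 * TH 1 τ z ^ 2

/-- The first derivative `∂ numA`. -/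
def numA1 (τ z : ℂ) : ℂ :=
  2 * Eis2 τ * TH 0 τ z * TH 1 τ z - 12 * TH 0 τ z * TH 3 τ z + 12 * TH 1 τ z * TH 2 τ z

/-- The second derivative `∂² numA`. -/
def numA2 (τ z : ℂ) : ℂ :=
  2 * Eis2 τ * (TH 1 τ z ^ 2 + TH 0 τ z * TH 2 τ z) - 12 * TH 0 τ z * TH 4 τ z
    + 12 * TH 2 τ z ^ 2

/-- The derivative `D numA`, where `D = (2πi)⁻¹ d/dτ`. -/
def numAD (τ z : ℂ) : ℂ :=
  (Eis2 τ ^ 2 - Eis4 τ) / 12 * TH 0 τ z ^ 2 + Eis2 τ * TH 0 τ z * TH 2 τ z - 6 * TH 2 τ z ^ 2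
    - 6 * TH 0 τ z * TH 4 τ z + 12 * TH 1 τ z * TH 3 τ z

lemma hasDerivAt_numA_z {τ : ℂ} (hτ : 0 < τ.im) (z : ℂ) :
    HasDerivAt (numA τ) (2 * π * I * numA1 τ z) z := by
  have h0 := hasDerivAt_TH_z 0 hτ z
  have h1 := hasDerivAt_TH_z 1 hτ z
  have h2 := hasDerivAt_TH_z 2 hτ z
  refine ((((h0.fun_pow 2).const_mul (Eis2 τ)).fun_sub ((h0.const_mul 12).fun_mul h2)).fun_add
    ((h1.fun_pow 2).const_mul 12)).congr_deriv ?_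
  simp only [numA1, zero_add, Nat.reduceAdd]
  push_cast
  ring

lemma hasDerivAt_numA1_z {τ : ℂ} (hτ : 0 < τ.im) (z : ℂ) :
    HasDerivAt (numA1 τ) (2 * π * I * numA2 τ z) z := by
  have h0 := hasDerivAt_TH_z 0 hτ z
  have h1 := hasDerivAt_TH_z 1 hτ z
  have h2 := hasDerivAt_TH_z 2 hτ z
  have h3 := hasDerivAt_TH_z 3 hτ z
  refine ((((h0.const_mul (2 * Eis2 τ)).fun_mul h1).fun_sub ((h0.const_mul 12).fun_mul h3)).fun_add
    ((h1.const_mul 12).fun_mul h2)).congr_deriv ?_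
  simp only [numA2, zero_add, Nat.reduceAdd]
  ring

lemma hasDerivAt_numA_tau {τ : ℂ} (hτ : 0 < τ.im) (z : ℂ) :
    HasDerivAt (fun t => numA t z) (2 * π * I * numAD τ z) τ := by
  have h0 := hasDerivAt_TH_tau 0 hτ z
  have h1 := hasDerivAt_TH_tau 1 hτ z
  have h2 := hasDerivAt_TH_tau 2 hτ z
  refine ((((hasDerivAt_Eis2 hτ).fun_mul (h0.fun_pow 2)).fun_sub
    ((h0.const_mul 12).fun_mul h2)).fun_add ((h1.fun_pow 2).const_mul 12)).congr_deriv ?_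
  simp only [numAD, zero_add, Nat.reduceAdd]
  push_cast
  ring

lemma numA_eq {τ : ℂ} (hτ : 0 < τ.im) {z : ℂ} (hz : TH 0 τ z ≠ 0) :
    e2 τ - Xf τ z = numA τ z / TH 0 τ z ^ 2 := by
  rw [e2_eq hτ, Xf, numA]
  field_simp
  ring

/-- A pointwise identity between continuous functions that holds at generic `z` holds everywhere. -/
lemma eq_of_good {τ : ℂ} (hτ : 0 < τ.im) {f g : ℂ → ℂ} (hf : Continuous f) (hg : Continuous g)
    (h : ∀ z, TH 0 τ z ≠ 0 → Qf τ z ≠ 0 → f z = g z) (z : ℂ) : f z = g z := by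
  have h1 : Filter.Tendsto f (nhdsWithin z {z}ᶜ) (nhds (f z)) :=
    hf.continuousAt.tendsto.mono_left nhdsWithin_le_nhds
  have h2 : Filter.Tendsto g (nhdsWithin z {z}ᶜ) (nhds (g z)) :=
    hg.continuousAt.tendsto.mono_left nhdsWithin_le_nhds
  refine tendsto_nhds_unique (h1.congr' ?_) h2
  filter_upwards [good_eventually hτ z] with w hw using h w hw.1 hw.2

/-- Homogeneous form of `∂²p = p²/2 - E₄/2`. -/
lemma rel_second {τ : ℂ} (hτ : 0 < τ.im) {z : ℂ} (hz : TH 0 τ z ≠ 0) (hQ : Qf τ z ≠ 0) :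
    -12 * (TH 0 τ z ^ 3 * TH 4 τ z - 4 * TH 0 τ z ^ 2 * TH 1 τ z * TH 3 τ z
      - 3 * TH 0 τ z ^ 2 * TH 2 τ z ^ 2 + 12 * TH 0 τ z * TH 1 τ z ^ 2 * TH 2 τ z
      - 6 * TH 1 τ z ^ 4) = numA τ z ^ 2 / 2 - Eis4 τ * TH 0 τ z ^ 4 / 2 := by
  have h := Rf_eq hτ hz hQ
  rw [numA_eq hτ hz, Rf, div_eq_iff (pow_ne_zero 4 hz)] at h
  rw [h]
  field_simp

/-- Homogeneous form of `(∂p)² = p³/3 - E₄ p + 2E₆/3`. -/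
lemma rel_first {τ : ℂ} (hτ : 0 < τ.im) {z : ℂ} (hz : TH 0 τ z ≠ 0) :
    144 * (TH 0 τ z ^ 2 * TH 3 τ z - 3 * TH 0 τ z * TH 1 τ z * TH 2 τ z
      + 2 * TH 1 τ z ^ 3) ^ 2 =
    numA τ z ^ 3 / 3 - Eis4 τ * numA τ z * TH 0 τ z ^ 4 + 2 / 3 * Eis6 τ * TH 0 τ z ^ 6 := by
  have h := ode hτ hz
  rw [numA_eq hτ hz, Qf, div_pow, div_eq_iff (pow_ne_zero 2 (pow_ne_zero 3 hz))] at h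
  field_simp at h ⊢
  linear_combination h

/-- The heat operator on `ϑ² · numA`. -/
lemma heat_AB {τ : ℂ} (hτ : 0 < τ.im) (z : ℂ) :
    12 * (numAD τ z * TH 0 τ z ^ 2 + numA τ z * (TH 0 τ z * TH 2 τ z))
      - 3 / 2 * (numA2 τ z * TH 0 τ z ^ 2 + 4 * numA1 τ z * TH 0 τ z * TH 1 τ z
        + numA τ z * (2 * TH 1 τ z ^ 2 + 2 * TH 0 τ z * TH 2 τ z)) =
    7 / 2 * Eis2 τ * numA τ z * TH 0 τ z ^ 2 - 13 / 4 * Eis4 τ * TH 0 τ z ^ 4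
      - 1 / 4 * numA τ z ^ 2 := by
  have h0 := (differentiable_TH 0 hτ).continuous
  have h1 := (differentiable_TH 1 hτ).continuous
  have h2 := (differentiable_TH 2 hτ).continuous
  have h3 := (differentiable_TH 3 hτ).continuous
  have h4 := (differentiable_TH 4 hτ).continuous
  refine eq_of_good hτ
    (f := fun z => 12 * (numAD τ z * TH 0 τ z ^ 2 + numA τ z * (TH 0 τ z * TH 2 τ z))
      - 3 / 2 * (numA2 τ z * TH 0 τ z ^ 2 + 4 * numA1 τ z * TH 0 τ z * TH 1 τ z
        + numA τ z * (2 * TH 1 τ z ^ 2 + 2 * TH 0 τ z * TH 2 τ z)))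
    (g := fun z => 7 / 2 * Eis2 τ * numA τ z * TH 0 τ z ^ 2 - 13 / 4 * Eis4 τ * TH 0 τ z ^ 4
      - 1 / 4 * numA τ z ^ 2) ?_ ?_ (fun z hz hQ => ?_) z
  · simp only [numA, numA1, numA2, numAD]; fun_prop
  · simp only [numA]; fun_prop
  have hr := rel_second hτ hz hQ
  simp only [numA, numA1, numA2, numAD] at hr ⊢
  linear_combination 9 / 2 * hr

/-- The heat operator on `numA²`. -/
lemma heat_AA {τ : ℂ} (hτ : 0 < τ.im) (z : ℂ) :
    24 * numA τ z * numAD τ z - 3 * (numA1 τ z ^ 2 + numA τ z * numA2 τ z) =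
    11 / 2 * Eis2 τ * numA τ z ^ 2 - 7 / 2 * Eis4 τ * numA τ z * TH 0 τ z ^ 2
      - 2 * Eis6 τ * TH 0 τ z ^ 4 := by
  have h0 := (differentiable_TH 0 hτ).continuous
  have h1 := (differentiable_TH 1 hτ).continuous
  have h2 := (differentiable_TH 2 hτ).continuous
  have h3 := (differentiable_TH 3 hτ).continuous
  have h4 := (differentiable_TH 4 hτ).continuous
  refine eq_of_good hτ
    (f := fun z => 24 * numA τ z * numAD τ z - 3 * (numA1 τ z ^ 2 + numA τ z * numA2 τ z))
    (g := fun z => 11 / 2 * Eis2 τ * numA τ z ^ 2 - 7 / 2 * Eis4 τ * numA τ z * TH 0 τ z ^ 2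
      - 2 * Eis6 τ * TH 0 τ z ^ 4) ?_ ?_ (fun z hz hQ => ?_) z
  · simp only [numA, numA1, numA2, numAD]; fun_prop
  · simp only [numA]; fun_prop
  have hr := rel_second hτ hz hQ
  have ho := rel_first hτ hz
  apply mul_left_cancel₀ (pow_ne_zero 2 hz)
  simp only [numA, numA1, numA2, numAD] at hr ho ⊢
  linear_combination 9 * (Eis2 τ * TH 0 τ z ^ 2 - 12 * TH 0 τ z * TH 2 τ z + 12 * TH 1 τ z ^ 2) * hr
    - 3 * ho

/-- The form `α φ_{0,1}² + β φ_{0,1} φ_{-2,1} + γ φ_{-2,1}²` with coefficients depending on `τ`. -/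
def comb (α β γ : ℂ → ℂ) (τ z : ℂ) : ℂ :=
  (α τ * numA τ z ^ 2 + β τ * (numA τ z * TH 0 τ z ^ 2) + γ τ * TH 0 τ z ^ 4) / etaD τ ^ 12

lemma hasDerivAt_comb_z {τ : ℂ} (hτ : 0 < τ.im) (α β γ : ℂ → ℂ) (z : ℂ) :
    HasDerivAt (comb α β γ τ) (2 * π * I * ((α τ * (2 * numA τ z * numA1 τ z) +
      β τ * (numA1 τ z * TH 0 τ z ^ 2 + 2 * numA τ z * TH 0 τ z * TH 1 τ z) +
      γ τ * (4 * TH 0 τ z ^ 3 * TH 1 τ z)) / etaD τ ^ 12)) z := by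
  have h0 := hasDerivAt_TH_z 0 hτ z
  have hA := hasDerivAt_numA_z hτ z
  refine (((((hA.fun_pow 2).const_mul (α τ)).fun_add
    ((hA.fun_mul (h0.fun_pow 2)).const_mul (β τ))).fun_add
    ((h0.fun_pow 4).const_mul (γ τ))).div_const _).congr_deriv ?_
  simp only [zero_add]
  push_cast
  ring

lemma deriv_deriv_comb {τ : ℂ} (hτ : 0 < τ.im) (α β γ : ℂ → ℂ) (z : ℂ) :
    deriv (deriv (comb α β γ τ)) z = (2 * π * I) ^ 2 * ((α τ *
        (2 * numA1 τ z ^ 2 + 2 * numA τ z * numA2 τ z) +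
      β τ * (numA2 τ z * TH 0 τ z ^ 2 + 4 * numA1 τ z * TH 0 τ z * TH 1 τ z
        + numA τ z * (2 * TH 1 τ z ^ 2 + 2 * TH 0 τ z * TH 2 τ z)) +
      γ τ * (12 * TH 0 τ z ^ 2 * TH 1 τ z ^ 2 + 4 * TH 0 τ z ^ 3 * TH 2 τ z))
        / etaD τ ^ 12) := by
  rw [funext fun w => (hasDerivAt_comb_z hτ α β γ w).deriv]
  have h0 := hasDerivAt_TH_z 0 hτ z
  have h1 := hasDerivAt_TH_z 1 hτ z
  have hA := hasDerivAt_numA_z hτ z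
  have hA1 := hasDerivAt_numA1_z hτ z
  refine (((((((hA.const_mul 2).fun_mul hA1).const_mul (α τ)).fun_add
    (((hA1.fun_mul (h0.fun_pow 2)).fun_add
      (((hA.const_mul 2).fun_mul h0).fun_mul h1)).const_mul (β τ))).fun_add
    ((((h0.fun_pow 3).const_mul 4).fun_mul h1).const_mul (γ τ))).div_const _).const_mul _).deriv.trans
    ?_
  simp only [zero_add, Nat.reduceAdd]
  push_cast
  ring

lemma hasDerivAt_comb_tau {τ : ℂ} (hτ : 0 < τ.im) {α β γ : ℂ → ℂ} {a b c : ℂ}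
    (hα : HasDerivAt α (2 * π * I * a) τ) (hβ : HasDerivAt β (2 * π * I * b) τ)
    (hγ : HasDerivAt γ (2 * π * I * c) τ) (z : ℂ) :
    HasDerivAt (fun t => comb α β γ t z) (2 * π * I * ((a * numA τ z ^ 2 +
      b * (numA τ z * TH 0 τ z ^ 2) + c * TH 0 τ z ^ 4 + α τ * (2 * numA τ z * numAD τ z) +
      β τ * (numAD τ z * TH 0 τ z ^ 2 + numA τ z * (TH 0 τ z * TH 2 τ z)) +
      γ τ * (2 * TH 0 τ z ^ 3 * TH 2 τ z)) / etaD τ ^ 12 - Eis2 τ / 2 * comb α β γ τ z)) τ := by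
  have h0 := hasDerivAt_TH_tau 0 hτ z
  have hA := hasDerivAt_numA_tau hτ z
  have hη := etaD_ne_zero hτ
  refine ((((hα.fun_mul (hA.fun_pow 2)).fun_add
    (hβ.fun_mul (hA.fun_mul (h0.fun_pow 2)))).fun_add
    (hγ.fun_mul (h0.fun_pow 4))).fun_div ((hasDerivAt_etaD hτ).fun_pow 12)
      (pow_ne_zero 12 hη)).congr_deriv ?_
  simp only [zero_add, comb]
  field_simp
  push_cast
  ring

/-- The modular heat operators preserve the forms `comb`. -/
lemma heatMod_comb {τ : ℂ} (hτ : 0 < τ.im) (k : ℚ) {α β γ : ℂ → ℂ} {a b c : ℂ}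
    (hα : HasDerivAt α (2 * π * I * a) τ) (hβ : HasDerivAt β (2 * π * I * b) τ)
    (hγ : HasDerivAt γ (2 * π * I * c) τ) (z : ℂ) :
    heatMod 2 k (comb α β γ) τ z =
      ((12 * a - k * Eis2 τ * α τ - β τ / 4) * numA τ z ^ 2 +
      (12 * b - (k + 2) * Eis2 τ * β τ - 7 / 2 * Eis4 τ * α τ - 3 / 2 * γ τ) *
        (numA τ z * TH 0 τ z ^ 2) +
      (12 * c - (k + 4) * Eis2 τ * γ τ - 13 / 4 * Eis4 τ * β τ - 2 * Eis6 τ * α τ) *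
        TH 0 τ z ^ 4) / etaD τ ^ 12 := by
  have hop : ∀ x y : ℂ, 12 / (2 * π * I) * (2 * π * I * x) +
      3 / (4 * π ^ 2 * ((2 : ℚ) : ℂ)) * ((2 * π * I) ^ 2 * y) = 12 * x - 3 / 2 * y := by
    intro x y
    have hπ : (π : ℂ) ≠ 0 := by exact_mod_cast Real.pi_ne_zero
    have hI := I_ne_zero
    push_cast
    field_simp
    rw [I_sq]
    ring
  have hAA := heat_AA hτ z
  have hAB := heat_AB hτ z
  rw [heatMod, heatOp, (hasDerivAt_comb_tau hτ hα hβ hγ z).deriv, deriv_deriv_comb hτ, hop]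
  simp only [comb]
  have hB : numA τ z = Eis2 τ * TH 0 τ z ^ 2 - 12 * TH 0 τ z * TH 2 τ z + 12 * TH 1 τ z ^ 2 := rfl
  linear_combination (α τ * hAA + β τ * hAB + 3 / 2 * γ τ * TH 0 τ z ^ 2 * hB) / etaD τ ^ 12

lemma heatMod_congr {φ ψ : ℂ → ℂ → ℂ} (h : ∀ t, 0 < t.im → ∀ z, φ t z = ψ t z) (m k : ℚ) {τ : ℂ}
    (hτ : 0 < τ.im) (z : ℂ) : heatMod m k φ τ z = heatMod m k ψ τ z := by
  have h1 : φ τ = ψ τ := funext (h τ hτ)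
  have h2 : (fun t => φ t z) =ᶠ[nhds τ] fun t => ψ t z := by
    filter_upwards [upper_mem_nhds hτ] with t ht using h t ht z
  rw [heatMod, heatMod, heatOp, heatOp, h1, h2.deriv_eq]

lemma thetaJ_fun_eq (τ : ℂ) : thetaJ τ = TH 0 τ := funext (thetaJ_eq τ)

lemma phi01_eq {τ : ℂ} (hτ : 0 < τ.im) (z : ℂ) : phi01 τ z = numA τ z / etaD τ ^ 6 := by
  have hη := etaD_ne_zero hτ
  have hπ : (π : ℂ) ≠ 0 := by exact_mod_cast Real.pi_ne_zero
  have h1 : deriv (TH 0 τ) = fun w => 2 * π * I * TH 1 τ w :=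
    funext fun w => (hasDerivAt_TH_z 0 hτ w).deriv
  have h2 : deriv (fun w => 2 * π * I * TH 1 τ w) z = 2 * π * I * (2 * π * I * TH 2 τ z) :=
    ((hasDerivAt_TH_z 1 hτ z).const_mul _).deriv
  rw [phi01, thetaJ_fun_eq, h1, h2, numA]
  field_simp
  rw [I_sq]
  ring

lemma phi02_eq {τ : ℂ} (hτ : 0 < τ.im) (z : ℂ) :
    phi02 τ z = comb (fun _ => 1 / 24) (fun _ => 0) (fun t => -1 / 24 * Eis4 t) τ z := by
  have hη := etaD_ne_zero hτ
  rw [phi02, phi01_eq hτ, phim21, thetaJ_fun_eq, comb]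
  field_simp
  ring

lemma heat_one {τ : ℂ} (hτ : 0 < τ.im) (z : ℂ) : heatMod 2 0 phi02 τ z =
    comb (fun _ => 0) (fun t => -1 / 12 * Eis4 t) (fun t => 1 / 12 * Eis6 t) τ z := by
  have hc (x : ℂ) : HasDerivAt (fun _ : ℂ => x) (2 * π * I * 0) τ := by
    simpa using hasDerivAt_const τ x
  rw [heatMod_congr (fun t ht w => phi02_eq ht w) 2 0 hτ z,
    heatMod_comb hτ 0 (c := -1 / 24 * ((Eis2 τ * Eis4 τ - Eis6 τ) / 3)) (hc _) (hc _)
      (((hasDerivAt_Eis4 hτ).const_mul _).congr_deriv (by ring)), comb]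
  push_cast
  ring

lemma heat_two {τ : ℂ} (hτ : 0 < τ.im) (z : ℂ) : heatMod 2 2 (heatMod 2 0 phi02) τ z =
    comb (fun t => 1 / 48 * Eis4 t) (fun t => 5 / 24 * Eis6 t)
      (fun t => -11 / 48 * Eis4 t ^ 2) τ z := by
  have hc (x : ℂ) : HasDerivAt (fun _ : ℂ => x) (2 * π * I * 0) τ := by
    simpa using hasDerivAt_const τ x
  rw [heatMod_congr (fun t ht w => heat_one ht w) 2 2 hτ z,
    heatMod_comb hτ 2 (b := -1 / 12 * ((Eis2 τ * Eis4 τ - Eis6 τ) / 3))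
      (c := 1 / 12 * ((Eis2 τ * Eis6 τ - Eis4 τ ^ 2) / 2)) (hc _)
      (((hasDerivAt_Eis4 hτ).const_mul _).congr_deriv (by ring))
      (((hasDerivAt_Eis6 hτ).const_mul _).congr_deriv (by ring)), comb]
  push_cast
  ring

lemma heat_three {τ : ℂ} (hτ : 0 < τ.im) (z : ℂ) :
    heatMod 2 4 (heatMod 2 2 (heatMod 2 0 phi02)) τ z =
    comb (fun t => -13 / 96 * Eis6 t) (fun t => -47 / 48 * Eis4 t ^ 2)
      (fun t => 107 / 96 * Eis4 t * Eis6 t) τ z := by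
  rw [heatMod_congr (fun t ht w => heat_two ht w) 2 4 hτ z,
    heatMod_comb hτ 4 (a := 1 / 48 * ((Eis2 τ * Eis4 τ - Eis6 τ) / 3))
      (b := 5 / 24 * ((Eis2 τ * Eis6 τ - Eis4 τ ^ 2) / 2))
      (c := -11 / 48 * (2 * Eis4 τ * ((Eis2 τ * Eis4 τ - Eis6 τ) / 3)))
      (((hasDerivAt_Eis4 hτ).const_mul _).congr_deriv (by ring))
      (((hasDerivAt_Eis6 hτ).const_mul _).congr_deriv (by ring))
      ((((hasDerivAt_Eis4 hτ).fun_pow 2).const_mul _).congr_deriv (by push_cast; ring)), comb]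
  push_cast
  ring

/-- degree-3 modular differential equation for `φ_{0,2}`:
`H^{(2)}_{4}H^{(2)}_{2}H^{(2)}_{0}(φ_{0,2}) − (47/4)·E₄·H^{(2)}_{0}(φ_{0,2}) + (13/4)·E₆·φ_{0,2} = 0`. -/
theorem statement14 (τ z : ℂ) (hτ : 0 < τ.im) :
    heatMod 2 4 (heatMod 2 2 (heatMod 2 0 phi02)) τ z
      - (47/4) * Eis4 τ * heatMod 2 0 phi02 τ z
      + (13/4) * Eis6 τ * phi02 τ z = 0 := by
  rw [heat_three hτ, heat_one hτ, phi02_eq hτ, comb, comb, comb]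
  ring
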